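/- Conditional sphere packing bound for varying classical-quantum channels: let A and X be finite sets, and for each a ∈ A let x ↦ S_{a,x} be a classical-quantum channel on H = ℂ^d. For every probability distribution P on A, every conditional distribution V(·|·) from A to X, every R > 0 and every 0 < ε < R, the reliability function for constant conditional composition satisfies E({C_a}, R, P, V) ≤ E_sp^cc({C_a}, R−ε, P, V), where E_sp^cc({C_a}, R, P, V) = sup_{ρ ≥ 0} [Σ_{a∈A} P(a) E_0^cc(C_a, ρ, V(·|a)) − ρR]. -/

import Mathlib

open scoped BigOperators ComplexOrder
noncomputable section

namespace SPB

/-- `-log t` with the convention that it is `+∞` for `t ≤ 0`. -/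
def negLog (t : ℝ) : EReal := if t ≤ 0 then (⊤ : EReal) else ((-Real.log t : ℝ) : EReal)

/-- Power of a positive semidefinite (more generally Hermitian) matrix by functional calculus
on the eigenvalues, with the convention `0 ^ r = 0` (so `A ^ 0` is the projection onto the
range of `A`). -/
def mpow {ι : Type*} [Fintype ι] [DecidableEq ι] (A : Matrix ι ι ℂ) (r : ℝ) :
    Matrix ι ι ℂ :=
  if hA : A.IsHermitian then
    (hA.eigenvectorUnitary : Matrix ι ι ℂ) *
      Matrix.diagonal (fun i => ((if hA.eigenvalues i = 0 then (0 : ℝ)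
        else hA.eigenvalues i ^ r : ℝ) : ℂ)) *
      (star (hA.eigenvectorUnitary : Matrix ι ι ℂ))
  else 0

/-- A density operator: positive semidefinite with trace one. -/
def IsDensity {ι : Type*} [Fintype ι] [DecidableEq ι] (A : Matrix ι ι ℂ) : Prop :=
  A.PosSemidef ∧ A.trace = 1

/-- A probability distribution on a finite alphabet. -/
def IsProbDist {X : Type*} [Fintype X] (P : X → ℝ) : Prop :=
  (∀ x, 0 ≤ P x) ∧ ∑ x, P x = 1

/-- The constant–composition sphere packing coefficient
`E₀^cc(ρ,P) = min_F -(1+ρ) ∑ₓ P(x) log Tr(Sₓ^{1/(1+ρ)} F^{ρ/(1+ρ)})`. -/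
def E0cc {X : Type*} [Fintype X] {d : ℕ} (S : X → Matrix (Fin d) (Fin d) ℂ)
    (ρ : ℝ) (P : X → ℝ) : EReal :=
  ⨅ F : {F : Matrix (Fin d) (Fin d) ℂ // IsDensity F},
    ((1 + ρ : ℝ) : EReal) *
      ∑ x, ((P x : ℝ) : EReal) *
        negLog ((Matrix.trace (mpow (S x) (1 / (1 + ρ)) * mpow F.1 (ρ / (1 + ρ)))).re)
/-- The empirical composition (type) of a word. -/
def composition {A : Type*} [Fintype A] [DecidableEq A] {n : ℕ} (w : Fin n → A) :
    A → ℝ :=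
  fun a => ((Finset.univ.filter (fun i => w i = a)).card : ℝ) / (n : ℝ)

/-- The conditional composition of a word `w` given a state sequence `a`:
`condComp a w α ξ` is the fraction of the positions `i` with `a i = α` where `w i = ξ`. -/
def condComp {A X : Type*} [Fintype A] [DecidableEq A] [Fintype X] [DecidableEq X] {n : ℕ}
    (a : Fin n → A) (w : Fin n → X) : A → X → ℝ :=
  fun α ξ => ((Finset.univ.filter (fun i => a i = α ∧ w i = ξ)).card : ℝ) /
    ((Finset.univ.filter (fun i => a i = α)).card : ℝ)

/-- The signal state of a codeword over the varying channel determined by the state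
sequence `a`. -/
def signalStateVar {A X : Type*} {d n : ℕ} (S : A → X → Matrix (Fin d) (Fin d) ℂ)
    (a : Fin n → A) (w : Fin n → X) : Matrix (Fin n → Fin d) (Fin n → Fin d) ℂ :=
  Matrix.of fun i j => ∏ k, S (a k) (w k) (i k) (j k)

/-- A POVM (sub-measurement) with `M` outcomes. -/
def IsPOVM {ι : Type*} [Fintype ι] [DecidableEq ι] {M : ℕ}
    (Pv : Fin M → Matrix ι ι ℂ) : Prop :=
  (∀ m, (Pv m).PosSemidef) ∧ (1 - ∑ m, Pv m).PosSemidef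

/-- `P_{e,max}`: the smallest maximum error probability of length-`n` codes of rate at
least `R`, used over the varying channel determined by the state sequence `a`, all of whose
codewords have conditional composition `W` given `a`. -/
def PemaxCond {A X : Type*} [Fintype A] [DecidableEq A] [Fintype X] [DecidableEq X] {d : ℕ}
    (S : A → X → Matrix (Fin d) (Fin d) ℂ) (n : ℕ) (R : ℝ)
    (a : Fin n → A) (W : A → X → ℝ) : ℝ :=
  sInf {e | ∃ (M : ℕ) (w : Fin M → Fin n → X)
      (Pv : Fin M → Matrix (Fin n → Fin d) (Fin n → Fin d) ℂ),
      Real.exp (n * R) ≤ M ∧ (∀ m, condComp a (w m) = W) ∧ IsPOVM Pv ∧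
      e = ⨆ m : Fin M, (1 - (Matrix.trace (Pv m * signalStateVar S a (w m))).re)}

/-- The reliability function `E({Cₐ}, R, P, V)` for constant conditional composition:
the limsup of `-(1/n) log P_{e,max}` over sequences of state sequences with compositions
tending to `P` and (realizable) conditional compositions tending to `V`. -/
def relECond {A X : Type*} [Fintype A] [DecidableEq A] [Fintype X] [DecidableEq X] {d : ℕ}
    (S : A → X → Matrix (Fin d) (Fin d) ℂ) (R : ℝ) (P : A → ℝ) (V : A → X → ℝ) : EReal :=
  ⨆ s : {s : (n : ℕ) → (Fin n → A) × (A → X → ℝ) //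
      Filter.Tendsto (fun n => composition (s n).1) Filter.atTop (nhds P) ∧
      Filter.Tendsto (fun n => (s n).2) Filter.atTop (nhds V) ∧
      ∀ n, ∃ w : Fin n → X, condComp (s n).1 w = (s n).2},
    Filter.limsup
      (fun n : ℕ => (((n : ℝ)⁻¹ : ℝ) : EReal) *
        negLog (PemaxCond S n R (s.1 n).1 (s.1 n).2))
      Filter.atTop

/-- The conditional sphere packing exponent
`E_sp^cc({Cₐ}, R, P, V) = sup_{ρ ≥ 0} [∑ₐ P(a) E₀^cc(Cₐ, ρ, V(·|a)) - ρ R]`. -/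
def EspccCond {A X : Type*} [Fintype A] [DecidableEq A] [Fintype X] [DecidableEq X] {d : ℕ}
    (S : A → X → Matrix (Fin d) (Fin d) ℂ) (R : ℝ) (P : A → ℝ) (V : A → X → ℝ) : EReal :=
  ⨆ ρ : {ρ : ℝ // 0 ≤ ρ},
    (∑ a, ((P a : ℝ) : EReal) * E0cc (S a) ρ.1 (V a)) - ((ρ.1 * R : ℝ) : EReal)

section
open scoped MatrixOrder Matrix.Norms.L2Operator

lemma mpow_eq_cfc {d : ℕ} {F : Matrix (Fin d) (Fin d) ℂ} (hF : F.PosSemidef) {s : ℝ} (hs : 0 < s) :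
    mpow F s = F ^ s := by
  have hF0 : 0 ≤ F := hF.nonneg
  rw [CFC.rpow_eq_cfc_real, hF.1.cfc_eq]
  unfold mpow Matrix.IsHermitian.cfc
  rw [dif_pos hF.1, Unitary.conjStarAlgAut_apply]
  congr 3
  ext i
  by_cases h : hF.1.eigenvalues i = 0
  · simp [h, Real.zero_rpow hs.ne']
  · simp [h]

lemma trace_mul_re_nonneg {ι : Type*} [Fintype ι] [DecidableEq ι] {A B : Matrix ι ι ℂ} (hA : A.PosSemidef)
    (hB : B.PosSemidef) : 0 ≤ (A * B).trace.re := by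
  obtain ⟨C, rfl⟩ := CStarAlgebra.nonneg_iff_eq_star_mul_self.mp hA.nonneg
  rw [mul_assoc, Matrix.trace_mul_comm]
  have := (hB.mul_mul_conjTranspose_same C).trace_nonneg
  exact (Complex.le_def.1 this).1

lemma mpow_concave {d : ℕ} {A F G : Matrix (Fin d) (Fin d) ℂ} (hA : A.PosSemidef)
    (hF : F.PosSemidef) (hG : G.PosSemidef) {s a b : ℝ} (hs : 0 < s) (hs1 : s < 1)
    (ha : 0 ≤ a) (hb : 0 ≤ b) (hab : a + b = 1) :
    a * (A * mpow F s).trace.re + b * (A * mpow G s).trace.re ≤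
      (A * mpow (a • F + b • G) s).trace.re := by
  have hc := (CFC.concaveOn_rpow (A := Matrix (Fin d) (Fin d) ℂ) (p := s) ⟨hs.le, hs1.le⟩).2
    (Set.mem_Ici.2 hF.nonneg) (Set.mem_Ici.2 hG.nonneg) ha hb hab
  rw [mpow_eq_cfc hF hs, mpow_eq_cfc hG hs, mpow_eq_cfc (by
    exact ((hF.smul ha).add (hG.smul hb))) hs]
  have := trace_mul_re_nonneg hA (Matrix.le_iff.1 hc)
  simp only [mul_sub, mul_add, Matrix.trace_sub, Matrix.trace_add, Matrix.mul_smul, Matrix.trace_smul,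
    Complex.sub_re, Complex.add_re, Complex.smul_re, smul_eq_mul] at this
  linarith
end

section classical
variable {Ω : Type*} [Fintype Ω]

def Zf (p b : Ω → ℝ) (s : ℝ) : ℝ := ∑ k, p k * Real.exp (s * b k)
def mf (p b : Ω → ℝ) (s : ℝ) : ℝ := (∑ k, p k * Real.exp (s * b k) * b k) / Zf p b s

lemma Zf_pos {p b : Ω → ℝ} (hp : ∀ k, 0 ≤ p k) (hp1 : 0 < ∑ k, p k) (s : ℝ) : 0 < Zf p b s := by
  obtain ⟨k, hk, hk2⟩ := Finset.exists_lt_of_sum_lt (s := Finset.univ) (f := fun _ => (0:ℝ)) (g := p)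
    (by simpa using hp1)
  exact Finset.sum_pos' (fun i _ => mul_nonneg (hp i) (Real.exp_pos _).le)
    ⟨k, hk, mul_pos hk2 (Real.exp_pos _)⟩

lemma logZf_support {p b : Ω → ℝ} (hp : ∀ k, 0 ≤ p k) (hp1 : 0 < ∑ k, p k) (s t : ℝ) :
    Real.log (Zf p b s) + (t - s) * mf p b s ≤ Real.log (Zf p b t) := by
  have hs := Zf_pos (b := b) hp hp1 s
  have ht := Zf_pos (b := b) hp hp1 t
  rw [← Real.log_exp ((t - s) * mf p b s), ← Real.log_mul hs.ne' (Real.exp_pos _).ne']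
  apply Real.log_le_log (mul_pos hs (Real.exp_pos _))
  -- tangent line at x0 = (t-s) m
  set x0 := (t - s) * mf p b s with hx0
  have key : ∀ k, p k * Real.exp (s * b k) * (Real.exp x0 * (1 + ((t - s) * b k - x0))) ≤
      p k * Real.exp (t * b k) := by
    intro k
    have h1 : Real.exp (t * b k) = Real.exp (s * b k) * (Real.exp x0 * Real.exp ((t - s) * b k - x0)) := by
      rw [← Real.exp_add, ← Real.exp_add]; congr 1; ring
    rw [h1, mul_assoc]
    apply mul_le_mul_of_nonneg_left _ (hp k)
    apply mul_le_mul_of_nonneg_left _ (Real.exp_pos _).le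
    apply mul_le_mul_of_nonneg_left _ (Real.exp_pos _).le
    have := Real.add_one_le_exp ((t - s) * b k - x0)
    linarith
  have h2 := Finset.sum_le_sum (fun k (_ : k ∈ Finset.univ) => key k)
  have h3 : ∑ k, p k * Real.exp (s * b k) * (Real.exp x0 * (1 + ((t - s) * b k - x0))) =
      Real.exp x0 * ((1 - x0) * Zf p b s + (t - s) * (∑ k, p k * Real.exp (s * b k) * b k)) := by
    unfold Zf
    rw [Finset.mul_sum, Finset.mul_sum, ← Finset.sum_add_distrib, Finset.mul_sum]
    apply Finset.sum_congr rfl; intro k _; ring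
  have h4 : (∑ k, p k * Real.exp (s * b k) * b k) = mf p b s * Zf p b s := by
    unfold mf; field_simp
  rw [h3, h4] at h2
  have : Real.exp x0 * ((1 - x0) * Zf p b s + (t - s) * (mf p b s * Zf p b s)) = Zf p b s * Real.exp x0 := by
    rw [hx0]; ring
  rw [this] at h2
  exact h2

lemma logZf_hasDeriv {p b : Ω → ℝ} (hp : ∀ k, 0 ≤ p k) (hp1 : 0 < ∑ k, p k) (s : ℝ) :
    HasDerivAt (fun s => Real.log (Zf p b s)) (mf p b s) s := by
  have hs := Zf_pos (b := b) hp hp1 s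
  have : HasDerivAt (Zf p b) (∑ k, p k * Real.exp (s * b k) * b k) s := by
    unfold Zf
    refine HasDerivAt.fun_sum fun k _ => ?_
    have := (((hasDerivAt_id s).mul_const (b k)).exp).const_mul (p k)
    simpa [mul_assoc] using this
  exact this.log hs.ne'

lemma mf_bound {p b : Ω → ℝ} {B : ℝ} (hp : ∀ k, 0 ≤ p k) (hp1 : 0 < ∑ k, p k)
    (hB : ∀ k, p k ≠ 0 → |b k| ≤ B) (s : ℝ) : |mf p b s| ≤ B := by
  have hs := Zf_pos (b := b) hp hp1 s
  unfold mf
  rw [abs_div, abs_of_pos hs, div_le_iff₀ hs]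
  refine (Finset.abs_sum_le_sum_abs _ _).trans ?_
  unfold Zf
  rw [Finset.mul_sum]
  apply Finset.sum_le_sum
  intro k _
  by_cases h : p k = 0
  · simp [h]
  · rw [abs_mul, abs_of_nonneg (mul_nonneg (hp k) (Real.exp_pos _).le), mul_comm]
    exact mul_le_mul_of_nonneg_right (hB k h) (mul_nonneg (hp k) (Real.exp_pos _).le)

lemma logZf_lip {p b : Ω → ℝ} {B : ℝ} (hp : ∀ k, 0 ≤ p k) (hp1 : 0 < ∑ k, p k)
    (hB : ∀ k, p k ≠ 0 → |b k| ≤ B) (s t : ℝ) :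
    Real.log (Zf p b s) - B * |t - s| ≤ Real.log (Zf p b t) := by
  have h := logZf_support (b := b) hp hp1 s t
  have h2 := mf_bound hp hp1 hB s
  have h3 : |(t - s) * mf p b s| ≤ |t - s| * B := by
    rw [abs_mul]; exact mul_le_mul_of_nonneg_left h2 (abs_nonneg _)
  have := neg_abs_le ((t - s) * mf p b s)
  linarith

lemma classical_core {L : Type*} [Fintype L] (p b : L → Ω → ℝ) (w : L → ℝ)
    (hp : ∀ l k, 0 ≤ p l k) (hp1 : ∀ l, 0 < ∑ k, p l k) (R' E η : ℝ)
    (h : ∀ s ∈ Set.Icc (0:ℝ) 1, - s * R' - (1 - s) * E - η ≤ ∑ l, w l * Real.log (Zf (p l) (b l) s)) :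
    ∃ T u v : L → Ω → ℝ, (∀ l k, 0 ≤ T l k) ∧ (∀ l, ∑ k, T l k = 1) ∧
      (∀ l k, p l k = T l k * Real.exp (- u l k)) ∧
      (∀ l k, p l k * Real.exp (b l k) = T l k * Real.exp (- v l k)) ∧
      (∑ l, w l * ∑ k, T l k * u l k ≤ E + η) ∧ (∑ l, w l * ∑ k, T l k * v l k ≤ R' + η) := by
  set ψ : ℝ → ℝ := fun s => (∑ l, w l * Real.log (Zf (p l) (b l) s)) - (- s * R' - (1 - s) * E) with hψ
  set M : ℝ → ℝ := fun s => ∑ l, w l * mf (p l) (b l) s with hM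
  have hd : ∀ s, HasDerivAt ψ (M s - (E - R')) s := by
    intro s
    have h1 : HasDerivAt (fun s => ∑ l, w l * Real.log (Zf (p l) (b l) s)) (M s) s :=
      HasDerivAt.fun_sum fun l _ => (logZf_hasDeriv (hp l) (hp1 l) s).const_mul (w l)
    have h2 : HasDerivAt (fun s : ℝ => - s * R' - (1 - s) * E) (E - R') s := by
      have := ((hasDerivAt_id s).neg.mul_const R').sub (((hasDerivAt_id s).const_sub 1).mul_const E)
      have e : E - R' = -1 * R' - -1 * E := by ring
      rw [e]
      exact this
    exact h1.sub h2
  obtain ⟨s, hs, hmin⟩ := isCompact_Icc.exists_isMinOn (s := Set.Icc (0:ℝ) 1) ⟨0, by simp⟩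
    (f := ψ) (fun x _ => (hd x).continuousAt.continuousWithinAt)
  have hder : ∀ y ∈ Set.Icc (0:ℝ) 1, 0 ≤ (y - s) * (M s - (E - R')) := by
    intro y hy
    have := hmin.localize.hasFDerivWithinAt_nonneg (hd s).hasFDerivAt.hasFDerivWithinAt
      (y := y - s) (mem_posTangentConeAt_of_segment_subset ((convex_Icc 0 1).segment_subset hs (by simpa using hy)))
    simpa using this
  have h0 := hder 0 (by simp)
  have h1 := hder 1 (by simp)
  have hψs := h s hs
  have hZ : ∀ l, 0 < Zf (p l) (b l) s := fun l => Zf_pos (hp l) (hp1 l) s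
  have hsumT : ∀ l, ∑ k, p l k * Real.exp (s * b l k) / Zf (p l) (b l) s = 1 := by
    intro l; rw [← Finset.sum_div]; exact div_self (hZ l).ne'
  have hmean : ∀ l (c e : ℝ), ∑ k, p l k * Real.exp (s * b l k) / Zf (p l) (b l) s * (c * b l k - e)
      = c * mf (p l) (b l) s - e := by
    intro l c e
    have : c * mf (p l) (b l) s - e = c * mf (p l) (b l) s - e * ∑ k, p l k * Real.exp (s * b l k) / Zf (p l) (b l) s := by
      rw [hsumT]; ring
    rw [this, mf, Finset.sum_div, Finset.mul_sum, Finset.mul_sum, ← Finset.sum_sub_distrib]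
    apply Finset.sum_congr rfl; intro k _; ring
  refine ⟨fun l k => p l k * Real.exp (s * b l k) / Zf (p l) (b l) s,
    fun l k => s * b l k - Real.log (Zf (p l) (b l) s),
    fun l k => (s - 1) * b l k - Real.log (Zf (p l) (b l) s), ?_, hsumT, ?_, ?_, ?_, ?_⟩
  · intro l k; exact div_nonneg (mul_nonneg (hp l k) (Real.exp_pos _).le) (hZ l).le
  · intro l k
    simp only [neg_sub, Real.exp_sub, Real.exp_log (hZ l)]
    have := (hZ l).ne'
    field_simp
  · intro l k
    have e : Real.exp (-((s - 1) * b l k - Real.log (Zf (p l) (b l) s))) =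
        Zf (p l) (b l) s * (Real.exp (b l k) / Real.exp (s * b l k)) := by
      rw [← Real.exp_sub]; nth_rewrite 2 [← Real.exp_log (hZ l)]; rw [← Real.exp_add]; congr 1; ring
    simp only [e]
    have := (hZ l).ne'
    field_simp
  · simp only [hmean]
    have : ∑ l, w l * (s * mf (p l) (b l) s - Real.log (Zf (p l) (b l) s)) = s * M s -
      ∑ l, w l * Real.log (Zf (p l) (b l) s) := by
      rw [hM, Finset.mul_sum, ← Finset.sum_sub_distrib]
      apply Finset.sum_congr rfl; intro k _; ring
    rw [this]; nlinarith
  · simp only [hmean]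
    have : ∑ l, w l * ((s - 1) * mf (p l) (b l) s - Real.log (Zf (p l) (b l) s)) = (s - 1) * M s -
      ∑ l, w l * Real.log (Zf (p l) (b l) s) := by
      rw [hM, Finset.mul_sum, ← Finset.sum_sub_distrib]
      apply Finset.sum_congr rfl; intro k _; ring
    rw [this]; nlinarith

end classical

section ld
variable {Ω : Type*} [Fintype Ω]

/-- Chernoff bound for a product distribution. -/
lemma chernoff {n : ℕ} (T u : Fin n → Ω → ℝ) (hT : ∀ i k, 0 ≤ T i k) (hT1 : ∀ i, ∑ k, T i k = 1)
    {B t c : ℝ} (hB : ∀ i k, |u i k| ≤ B) (ht : 0 < t) (htB : t * B ≤ 1)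
    (G : Finset (Fin n → Ω)) (hG : ∀ ω ∈ G, c ≤ ∑ i, u i (ω i)) :
    ∑ ω ∈ G, ∏ i, T i (ω i) ≤
      Real.exp (t * ∑ i, ∑ k, T i k * u i k + n * (t * B) ^ 2 - t * c) := by
  classical
  have h1 : ∑ ω ∈ G, ∏ i, T i (ω i) ≤ ∑ ω ∈ G, (∏ i, T i (ω i) * Real.exp (t * u i (ω i))) * Real.exp (- (t * c)) := by
    apply Finset.sum_le_sum
    intro ω hω
    rw [Finset.prod_mul_distrib, ← Real.exp_sum, mul_assoc, ← Real.exp_add, ← Finset.mul_sum]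
    refine le_mul_of_one_le_right (Finset.prod_nonneg fun i _ => hT i _) (Real.one_le_exp ?_)
    have := mul_le_mul_of_nonneg_left (hG ω hω) ht.le
    linarith
  have h2 : ∑ ω ∈ G, (∏ i, T i (ω i) * Real.exp (t * u i (ω i))) * Real.exp (- (t * c)) ≤
      ∑ ω : Fin n → Ω, (∏ i, T i (ω i) * Real.exp (t * u i (ω i))) * Real.exp (- (t * c)) := by
    apply Finset.sum_le_sum_of_subset_of_nonneg (Finset.subset_univ _)
    intro ω _ _
    exact mul_nonneg (Finset.prod_nonneg fun i _ => mul_nonneg (hT i _) (Real.exp_pos _).le) (Real.exp_pos _).le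
  have h3 : ∑ ω : Fin n → Ω, (∏ i, T i (ω i) * Real.exp (t * u i (ω i))) =
      ∏ i, ∑ k, T i k * Real.exp (t * u i k) := by
    rw [Finset.prod_univ_sum, Fintype.piFinset_univ]
  have h4 : ∀ i, ∑ k, T i k * Real.exp (t * u i k) ≤ Real.exp (t * ∑ k, T i k * u i k + (t * B) ^ 2) := by
    intro i
    have : ∑ k, T i k * Real.exp (t * u i k) ≤ ∑ k, T i k * (1 + t * u i k + (t * B) ^ 2) := by
      apply Finset.sum_le_sum
      intro k _
      apply mul_le_mul_of_nonneg_left _ (hT i k)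
      have hb : |t * u i k| ≤ t * B := by
        rw [abs_mul, abs_of_pos ht]; exact mul_le_mul_of_nonneg_left (hB i k) ht.le
      have h := Real.abs_exp_sub_one_sub_id_le (hb.trans htB)
      have h' := (abs_le.1 h).2
      have h'' : (t * u i k) ^ 2 ≤ (t * B) ^ 2 := by
        rw [← sq_abs]; exact pow_le_pow_left₀ (abs_nonneg _) hb 2
      linarith
    refine this.trans ?_
    have e : ∑ k, T i k * (1 + t * u i k + (t * B) ^ 2) = t * ∑ k, T i k * u i k + (t * B) ^ 2 + 1 := by
      have : ∀ k, T i k * (1 + t * u i k + (t * B) ^ 2) = t * (T i k * u i k) + (1 + (t * B) ^ 2) * T i k := by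
        intro k; ring
      simp only [this]
      rw [Finset.sum_add_distrib, ← Finset.mul_sum, ← Finset.mul_sum, hT1]; ring
    rw [e]; exact Real.add_one_le_exp _
  have h5 : ∏ i, ∑ k, T i k * Real.exp (t * u i k) ≤
      ∏ i, Real.exp (t * ∑ k, T i k * u i k + (t * B) ^ 2) :=
    Finset.prod_le_prod (fun i _ => Finset.sum_nonneg fun k _ => mul_nonneg (hT i k) (Real.exp_pos _).le)
      fun i _ => h4 i
  calc _ ≤ _ := h1
    _ ≤ _ := h2
    _ = (∏ i, ∑ k, T i k * Real.exp (t * u i k)) * Real.exp (- (t * c)) := by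
        rw [← Finset.sum_mul, h3]
    _ ≤ (∏ i, Real.exp (t * ∑ k, T i k * u i k + (t * B) ^ 2)) * Real.exp (- (t * c)) :=
        mul_le_mul_of_nonneg_right h5 (Real.exp_pos _).le
    _ = _ := by
        rw [← Real.exp_sum, ← Real.exp_add, Finset.sum_add_distrib, ← Finset.mul_sum]
        congr 1
        simp
        ring

/-- Product lower bound: `∑ min (P, cQ)` on product alphabets. -/
lemma ld_bound {L : Type*} [Fintype L] (T u v : L → Ω → ℝ)
    (hT : ∀ l k, 0 ≤ T l k) (hT1 : ∀ l, ∑ k, T l k = 1) (η : ℝ) (hη : 0 < η) :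
    ∃ n0 : ℕ, ∀ n ≥ n0, ∀ (ℓ : Fin n → L) (D1 D2 : ℝ),
      (∑ i, ∑ k, T (ℓ i) k * u (ℓ i) k ≤ n * D1) → (∑ i, ∑ k, T (ℓ i) k * v (ℓ i) k ≤ n * D2) →
      ∃ G : Finset (Fin n → Ω), 1 / 2 ≤ ∑ ω ∈ G, ∏ i, T (ℓ i) (ω i) ∧
        ∀ ω ∈ G, ∑ i, u (ℓ i) (ω i) ≤ n * (D1 + η) ∧ ∑ i, v (ℓ i) (ω i) ≤ n * (D2 + η) := by
  classical
  set B : ℝ := ∑ l, ∑ k, (|u l k| + |v l k|) + 1 with hBdef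
  have hB1 : ∀ l k, |u l k| + |v l k| ≤ B - 1 := by
    intro l k
    have h1 : |u l k| + |v l k| ≤ ∑ k, (|u l k| + |v l k|) :=
      Finset.single_le_sum (f := fun k => |u l k| + |v l k|) (fun _ _ => by positivity) (Finset.mem_univ k)
    have h2 : ∑ k, (|u l k| + |v l k|) ≤ ∑ l, ∑ k, (|u l k| + |v l k|) :=
      Finset.single_le_sum (f := fun l => ∑ k, (|u l k| + |v l k|)) (fun _ _ => by positivity) (Finset.mem_univ l)
    simp only [hBdef]; linarith
  have hB0 : 1 ≤ B := by
    have : 0 ≤ ∑ l, ∑ k, (|u l k| + |v l k|) := by positivity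
    linarith
  -- choose t
  set t : ℝ := min (1 / B) (η / (2 * B ^ 2)) with ht
  have ht0 : 0 < t := by positivity
  have htB : t * B ≤ 1 := by
    have : t ≤ 1 / B := min_le_left _ _
    rwa [le_div_iff₀ (by linarith)] at this
  have htB2 : (t * B) ^ 2 ≤ t * (η / 2) := by
    have : t ≤ η / (2 * B ^ 2) := min_le_right _ _
    rw [le_div_iff₀ (by positivity)] at this
    nlinarith
  obtain ⟨n0, hn0⟩ := exists_nat_ge (Real.log 4 / (t * (η / 2)))
  refine ⟨n0, fun n hn ℓ D1 D2 h1 h2 => ?_⟩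
  have hn' : Real.log 4 ≤ n * (t * (η / 2)) := by
    have : Real.log 4 / (t * (η / 2)) ≤ n := hn0.trans (by exact_mod_cast hn)
    rwa [div_le_iff₀ (by positivity)] at this
  have tail : ∀ (f : L → Ω → ℝ) (D : ℝ), (∀ l k, |f l k| ≤ B) →
      (∑ i, ∑ k, T (ℓ i) k * f (ℓ i) k ≤ n * D) →
      ∑ ω ∈ Finset.univ.filter (fun ω : Fin n → Ω => n * (D + η) ≤ ∑ i, f (ℓ i) (ω i)), ∏ i, T (ℓ i) (ω i) ≤ 1 / 4 := by
    intro f D hf hD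
    have h := chernoff (fun i => T (ℓ i)) (fun i => f (ℓ i)) (fun i => hT _) (fun i => hT1 _)
      (fun i => hf _) ht0 htB (c := n * (D + η)) (Finset.univ.filter (fun ω : Fin n → Ω => n * (D + η) ≤ ∑ i, f (ℓ i) (ω i))) (fun ω hω => (Finset.mem_filter.1 hω).2)
    refine h.trans ?_
    have e : (1:ℝ) / 4 = Real.exp (- Real.log 4) := by
      rw [Real.exp_neg, Real.exp_log (by norm_num)]; norm_num
    rw [e]
    apply Real.exp_le_exp.2
    have a1 := mul_le_mul_of_nonneg_left hD ht0.le
    have a2 : (n:ℝ) * (t * B) ^ 2 ≤ n * (t * (η / 2)) := mul_le_mul_of_nonneg_left htB2 (Nat.cast_nonneg n)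
    nlinarith
  have t1 := tail u D1 (fun l k => by have := hB1 l k; have := abs_nonneg (v l k); linarith) h1
  have t2 := tail v D2 (fun l k => by have := hB1 l k; have := abs_nonneg (u l k); linarith) h2
  have tot : ∑ ω : Fin n → Ω, ∏ i, T (ℓ i) (ω i) = 1 := by
    have : ∏ i, ∑ k, T (ℓ i) k = ∑ ω : Fin n → Ω, ∏ i, T (ℓ i) (ω i) := by
      rw [Finset.prod_univ_sum, Fintype.piFinset_univ]
    rw [← this]; simp [hT1]
  set G1 := Finset.univ.filter (fun ω : Fin n → Ω => n * (D1 + η) ≤ ∑ i, u (ℓ i) (ω i)) with hG1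
  set G2 := Finset.univ.filter (fun ω : Fin n → Ω => n * (D2 + η) ≤ ∑ i, v (ℓ i) (ω i)) with hG2
  refine ⟨(G1 ∪ G2)ᶜ, ?_, ?_⟩
  · have h3 := Finset.sum_add_sum_compl (G1 ∪ G2) (fun ω : Fin n → Ω => ∏ i, T (ℓ i) (ω i))
    have h4 : ∑ ω ∈ G1 ∪ G2, ∏ i, T (ℓ i) (ω i) ≤ ∑ ω ∈ G1, ∏ i, T (ℓ i) (ω i) + ∑ ω ∈ G2, ∏ i, T (ℓ i) (ω i) := by
      rw [← Finset.sum_union_inter]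
      exact le_add_of_nonneg_right (Finset.sum_nonneg fun ω _ => Finset.prod_nonneg fun i _ => hT _ _)
    linarith
  · intro ω hω
    simp only [Finset.mem_compl, Finset.mem_union, not_or, hG1, hG2, Finset.mem_filter, Finset.mem_univ,
      true_and, not_le] at hω
    exact ⟨hω.1.le, hω.2.le⟩

end ld

section quantum
open Matrix

variable {ι : Type*} [Fintype ι] [DecidableEq ι]

lemma psd_sub_sq {Q : Matrix ι ι ℂ} (hQ : Q.PosSemidef) (hQ' : (1 - Q).PosSemidef) :
    (Q - Q * Q).PosSemidef := by
  have h1 := hQ'.mul_mul_conjTranspose_same Q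
  have h2 := hQ.mul_mul_conjTranspose_same (1 - Q)
  rw [hQ.1.eq] at h1
  rw [hQ'.1.eq] at h2
  have := h1.add h2
  convert this using 1
  noncomm_ring

lemma conj_entry_ge {Q U W : Matrix ι ι ℂ} (hQ : Q.PosSemidef) (hQ' : (1 - Q).PosSemidef)
    (hW : W * star W = 1) (i : ι) :
    ∑ j, Complex.normSq ((star U * Q * W) i j) ≤ ((star U * Q * U) i i).re := by
  have h := (psd_sub_sq hQ hQ').conjTranspose_mul_mul_same U
  have h2 := h.diag_nonneg (i := i)
  have h3 : (star U * (Q * Q) * U) i i = ((∑ j, Complex.normSq ((star U * Q * W) i j) : ℝ) : ℂ) := by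
    have : star U * (Q * Q) * U = (star U * Q * W) * star (star U * Q * W) := by
      simp only [star_mul, star_star]
      have hs : star Q = Q := hQ.1
      rw [hs]
      calc _ = star U * Q * (W * star W) * Q * U := by rw [hW]; noncomm_ring
        _ = _ := by noncomm_ring
    rw [this, Matrix.mul_apply, Complex.ofReal_sum]
    apply Finset.sum_congr rfl
    intro j _
    rw [Matrix.star_apply, Complex.star_def, Complex.mul_conj]
  have h4 : ((Uᴴ * (Q - Q * Q) * U) i i) = (star U * Q * U) i i - (star U * (Q * Q) * U) i i := by
    rw [Matrix.mul_sub, Matrix.sub_mul, Matrix.sub_apply]; rfl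
  rw [h4, h3] at h2
  have := (Complex.le_def.1 h2).1
  simp only [Complex.sub_re, Complex.ofReal_re, Complex.zero_re] at this
  linarith

lemma trace_conj_diag {Q U : Matrix ι ι ℂ} (x : ι → ℝ) :
    (Q * (U * diagonal (fun i => (x i : ℂ)) * star U)).trace.re = ∑ i, x i * ((star U * Q * U) i i).re := by
  have : (Q * (U * diagonal (fun i => (x i : ℂ)) * star U)).trace =
      ((star U * Q * U) * diagonal (fun i => (x i : ℂ))).trace := by
    rw [← Matrix.mul_assoc, Matrix.trace_mul_comm]
    congr 1
    noncomm_ring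
  rw [this, Matrix.trace, Complex.re_sum]
  apply Finset.sum_congr rfl
  intro i _
  simp [Matrix.mul_diagonal, mul_comm]

lemma hyp_test {Q U W : Matrix ι ι ℂ} (hQ : Q.PosSemidef) (hQ' : (1 - Q).PosSemidef)
    (hU : U * star U = 1) (hW : W * star W = 1) (x y : ι → ℝ) (hx : ∀ i, 0 ≤ x i) (hy : ∀ i, 0 ≤ y i)
    {c : ℝ} (hc : 0 ≤ c) :
    (1 / 2) * ∑ i, ∑ j, min (x i) (c * y j) * Complex.normSq ((star U * W) i j) ≤
      ((1 - Q) * (U * diagonal (fun i => (x i : ℂ)) * star U)).trace.re +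
      c * (Q * (W * diagonal (fun i => (y i : ℂ)) * star W)).trace.re := by
  rw [trace_conj_diag, trace_conj_diag]
  have a1 : ∑ i, ∑ j, x i * Complex.normSq ((star U * (1 - Q) * W) i j) ≤
      ∑ i, x i * ((star U * (1 - Q) * U) i i).re := by
    apply Finset.sum_le_sum; intro i _
    rw [← Finset.mul_sum]
    exact mul_le_mul_of_nonneg_left (conj_entry_ge hQ' (by simpa using hQ) hW i) (hx i)
  have a2 : ∑ j, ∑ i, y j * Complex.normSq ((star W * Q * U) j i) ≤
      ∑ j, y j * ((star W * Q * W) j j).re := by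
    apply Finset.sum_le_sum; intro i _
    rw [← Finset.mul_sum]
    exact mul_le_mul_of_nonneg_left (conj_entry_ge hQ hQ' hU i) (hy i)
  have a3 := mul_le_mul_of_nonneg_left a2 hc
  refine le_trans ?_ (add_le_add a1 a3)
  rw [Finset.sum_comm (f := fun j i => y j * Complex.normSq ((star W * Q * U) j i)), Finset.mul_sum,
    Finset.mul_sum, ← Finset.sum_add_distrib]
  apply Finset.sum_le_sum; intro i _
  rw [Finset.mul_sum, Finset.mul_sum, ← Finset.sum_add_distrib]
  apply Finset.sum_le_sum; intro j _
  have hn : Complex.normSq ((star W * Q * U) j i) = Complex.normSq ((star U * Q * W) i j) := by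
    have : star U * Q * W = star (star W * Q * U) := by
      have hs : star Q = Q := hQ.1
      simp only [star_mul, star_star, hs]; noncomm_ring
    rw [this, Matrix.star_apply, Complex.star_def, Complex.normSq_conj]
  rw [hn]
  have hsum : (star U * W) i j = (star U * (1 - Q) * W) i j + (star U * Q * W) i j := by
    rw [← Matrix.add_apply, ← Matrix.add_mul, ← Matrix.mul_add, sub_add_cancel, Matrix.mul_one]
  set X := (star U * (1 - Q) * W) i j
  set Y := (star U * Q * W) i j
  have hXY : Complex.normSq (X + Y) ≤ 2 * (Complex.normSq X + Complex.normSq Y) := by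
    simp only [Complex.normSq_apply, Complex.add_re, Complex.add_im]
    nlinarith [sq_nonneg (X.re - Y.re), sq_nonneg (X.im - Y.im)]
  rw [hsum]
  have m0 : 0 ≤ min (x i) (c * y j) := le_min (hx i) (mul_nonneg hc (hy j))
  have m1 := mul_le_mul_of_nonneg_right (min_le_left (x i) (c * y j)) (Complex.normSq_nonneg X)
  have m2 := mul_le_mul_of_nonneg_right (min_le_right (x i) (c * y j)) (Complex.normSq_nonneg Y)
  have m3 := mul_le_mul_of_nonneg_left hXY m0
  nlinarith

/-- Tensor products. -/
def tens {n d : ℕ} (M : Fin n → Matrix (Fin d) (Fin d) ℂ) : Matrix (Fin n → Fin d) (Fin n → Fin d) ℂ :=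
  Matrix.of fun i j => ∏ k, M k (i k) (j k)

lemma tens_mul {n d : ℕ} (M N : Fin n → Matrix (Fin d) (Fin d) ℂ) :
    tens M * tens N = tens (fun k => M k * N k) := by
  ext i j
  simp only [tens, Matrix.mul_apply, Matrix.of_apply, ← Finset.prod_mul_distrib]
  rw [Finset.prod_univ_sum, Fintype.piFinset_univ]

lemma tens_diag {n d : ℕ} (x : Fin n → Fin d → ℂ) :
    tens (fun k => diagonal (x k)) = diagonal (fun i => ∏ k, x k (i k)) := by
  ext i j
  simp only [tens, Matrix.of_apply]
  by_cases h : i = j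
  · subst h; simp
  · rw [Matrix.diagonal_apply_ne _ h]
    obtain ⟨k, hk⟩ := Function.ne_iff.1 h
    exact Finset.prod_eq_zero (Finset.mem_univ k) (Matrix.diagonal_apply_ne _ hk)

lemma tens_one {n d : ℕ} : tens (fun _ : Fin n => (1 : Matrix (Fin d) (Fin d) ℂ)) = 1 := by
  have := tens_diag (n := n) (d := d) (fun _ _ => 1)
  simpa using this

lemma tens_star {n d : ℕ} (M : Fin n → Matrix (Fin d) (Fin d) ℂ) :
    star (tens M) = tens (fun k => star (M k)) := by
  ext i j
  simp [tens, Matrix.star_apply]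

lemma tens_trace {n d : ℕ} (M : Fin n → Matrix (Fin d) (Fin d) ℂ) :
    (tens M).trace = ∏ k, (M k).trace := by
  simp only [Matrix.trace, tens, Matrix.diag_apply, Matrix.of_apply]
  rw [Finset.prod_univ_sum, Fintype.piFinset_univ]

/-- overlaps of the eigenbases -/
def ov {d : ℕ} {S F : Matrix (Fin d) (Fin d) ℂ} (hS : S.IsHermitian) (hF : F.IsHermitian)
    (k : Fin d × Fin d) : ℝ :=
  Complex.normSq ((star (hS.eigenvectorUnitary : Matrix (Fin d) (Fin d) ℂ) *
    (hF.eigenvectorUnitary : Matrix (Fin d) (Fin d) ℂ)) k.1 k.2)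

lemma herm_eq {S : Matrix ι ι ℂ} (hS : S.IsHermitian) :
    S = (hS.eigenvectorUnitary : Matrix ι ι ℂ) * diagonal (fun i => (hS.eigenvalues i : ℂ)) *
      star (hS.eigenvectorUnitary : Matrix ι ι ℂ) := by
  have := hS.spectral_theorem
  rw [Unitary.conjStarAlgAut_apply] at this
  exact this

lemma one_shot {n d : ℕ} (S F : Fin n → Matrix (Fin d) (Fin d) ℂ)
    (hS : ∀ k, (S k).PosSemidef) (hF : ∀ k, (F k).PosSemidef)
    {Q : Matrix (Fin n → Fin d) (Fin n → Fin d) ℂ} (hQ : Q.PosSemidef) (hQ' : (1 - Q).PosSemidef)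
    {c : ℝ} (hc : 0 ≤ c) :
    (1 / 2) * ∑ ω : Fin n → Fin d × Fin d,
      min (∏ k, ((hS k).1.eigenvalues (ω k).1 * ov (hS k).1 (hF k).1 (ω k)))
        (c * ∏ k, ((hF k).1.eigenvalues (ω k).2 * ov (hS k).1 (hF k).1 (ω k))) ≤
      ((1 - Q) * tens S).trace.re + c * (Q * tens F).trace.re := by
  set U : Fin n → Matrix (Fin d) (Fin d) ℂ := fun k => ((hS k).1.eigenvectorUnitary : Matrix (Fin d) (Fin d) ℂ)
  set W : Fin n → Matrix (Fin d) (Fin d) ℂ := fun k => ((hF k).1.eigenvectorUnitary : Matrix (Fin d) (Fin d) ℂ)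
  have hU : tens U * star (tens U) = 1 := by
    rw [tens_star, tens_mul, ← tens_one]; congr 1; ext1 k
    exact Unitary.coe_mul_star_self _
  have hW : tens W * star (tens W) = 1 := by
    rw [tens_star, tens_mul, ← tens_one]; congr 1; ext1 k
    exact Unitary.coe_mul_star_self _
  have eS : tens S = tens U * diagonal (fun i => ((∏ k, (hS k).1.eigenvalues (i k) : ℝ) : ℂ)) * star (tens U) := by
    have : (fun i : Fin n → Fin d => ((∏ k, (hS k).1.eigenvalues (i k) : ℝ) : ℂ)) =
      fun i => ∏ k, (((hS k).1.eigenvalues (i k) : ℝ) : ℂ) := by ext i; push_cast; rfl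
    rw [this, ← tens_diag (fun k i => (((hS k).1.eigenvalues i : ℝ) : ℂ)), tens_star, tens_mul, tens_mul]
    congr 1; ext1 k
    exact herm_eq (hS k).1
  have eF : tens F = tens W * diagonal (fun i => ((∏ k, (hF k).1.eigenvalues (i k) : ℝ) : ℂ)) * star (tens W) := by
    have : (fun i : Fin n → Fin d => ((∏ k, (hF k).1.eigenvalues (i k) : ℝ) : ℂ)) =
      fun i => ∏ k, (((hF k).1.eigenvalues (i k) : ℝ) : ℂ) := by ext i; push_cast; rfl
    rw [this, ← tens_diag (fun k i => (((hF k).1.eigenvalues i : ℝ) : ℂ)), tens_star, tens_mul, tens_mul]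
    congr 1; ext1 k
    exact herm_eq (hF k).1
  have h := hyp_test hQ hQ' hU hW (fun i => ∏ k, (hS k).1.eigenvalues (i k))
    (fun i => ∏ k, (hF k).1.eigenvalues (i k))
    (fun i => Finset.prod_nonneg fun k _ => (hS k).eigenvalues_nonneg _)
    (fun i => Finset.prod_nonneg fun k _ => (hF k).eigenvalues_nonneg _) hc
  rw [← eS, ← eF] at h
  refine le_trans (le_of_eq ?_) h
  congr 1
  rw [← Fintype.sum_prod_type', ← (Equiv.arrowProdEquivProdArrow (Fin n) (fun _ => Fin d) (fun _ => Fin d)).sum_comp]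
  apply Finset.sum_congr rfl
  intro ω _
  have hov : Complex.normSq ((star (tens U) * tens W) (fun k => (ω k).1) (fun k => (ω k).2)) =
      ∏ k, ov (hS k).1 (hF k).1 (ω k) := by
    rw [tens_star, tens_mul]
    simp only [tens, Matrix.of_apply, map_prod]
    rfl
  simp only [Equiv.arrowProdEquivProdArrow, Equiv.coe_fn_mk]
  have hnn : 0 ≤ ∏ k, ov (hS k).1 (hF k).1 (ω k) :=
    Finset.prod_nonneg fun k _ => Complex.normSq_nonneg _
  rw [hov, min_mul_of_nonneg _ _ hnn]
  rw [Finset.prod_mul_distrib, Finset.prod_mul_distrib, mul_assoc]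

end quantum

section letters
open Matrix
variable {d : ℕ} {S F : Matrix (Fin d) (Fin d) ℂ}

lemma ov_nonneg (hS : S.IsHermitian) (hF : F.IsHermitian) (k) : 0 ≤ ov hS hF k :=
  Complex.normSq_nonneg _

lemma unitary_row {N : Matrix (Fin d) (Fin d) ℂ} (hN : N * star N = 1) (i : Fin d) :
    ∑ j, Complex.normSq (N i j) = 1 := by
  have := congrFun (congrFun hN i) i
  rw [Matrix.mul_apply, Matrix.one_apply_eq] at this
  have h2 : ∑ j, N i j * star N j i = ((∑ j, Complex.normSq (N i j) : ℝ) : ℂ) := by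
    rw [Complex.ofReal_sum]
    apply Finset.sum_congr rfl; intro j _
    rw [Matrix.star_apply, Complex.star_def, Complex.mul_conj]
  rw [h2] at this
  exact_mod_cast this

lemma ov_row (hS : S.IsHermitian) (hF : F.IsHermitian) (i : Fin d) : ∑ j, ov hS hF (i, j) = 1 := by
  apply unitary_row
  simp only [star_mul, star_star]
  calc _ = star (hS.eigenvectorUnitary : Matrix (Fin d) (Fin d) ℂ) *
      ((hF.eigenvectorUnitary : Matrix (Fin d) (Fin d) ℂ) * star (hF.eigenvectorUnitary : Matrix (Fin d) (Fin d) ℂ))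
        * (hS.eigenvectorUnitary : Matrix (Fin d) (Fin d) ℂ) := by noncomm_ring
    _ = 1 := by
      have h1 : (hF.eigenvectorUnitary : Matrix (Fin d) (Fin d) ℂ) *
          star (hF.eigenvectorUnitary : Matrix (Fin d) (Fin d) ℂ) = 1 := Unitary.coe_mul_star_self _
      have h2 : star (hS.eigenvectorUnitary : Matrix (Fin d) (Fin d) ℂ) *
          (hS.eigenvectorUnitary : Matrix (Fin d) (Fin d) ℂ) = 1 := Unitary.coe_star_mul_self _
      rw [h1, Matrix.mul_one, h2]

lemma ov_symm (hS : S.IsHermitian) (hF : F.IsHermitian) (i j : Fin d) : ov hS hF (i, j) = ov hF hS (j, i) := by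
  unfold ov
  have : star (hF.eigenvectorUnitary : Matrix (Fin d) (Fin d) ℂ) *
    (hS.eigenvectorUnitary : Matrix (Fin d) (Fin d) ℂ) = star (star (hS.eigenvectorUnitary : Matrix (Fin d) (Fin d) ℂ) *
    (hF.eigenvectorUnitary : Matrix (Fin d) (Fin d) ℂ)) := by simp [star_mul]
  rw [this, Matrix.star_apply, Complex.star_def, Complex.normSq_conj]

lemma ov_col (hS : S.IsHermitian) (hF : F.IsHermitian) (j : Fin d) : ∑ i, ov hS hF (i, j) = 1 := by
  simp only [ov_symm hS hF]; exact ov_row hF hS j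

lemma eig_sum (hS : S.IsHermitian) (h1 : S.trace = 1) : ∑ i, hS.eigenvalues i = 1 := by
  have := hS.trace_eq_sum_eigenvalues
  rw [h1] at this
  have h2 : ((∑ i, hS.eigenvalues i : ℝ) : ℂ) = 1 := by rw [this, Complex.ofReal_sum]; rfl
  exact_mod_cast h2

/-- scalar power with `0^r = 0` -/
def pw (x r : ℝ) : ℝ := if x = 0 then 0 else x ^ r

lemma mpow_def' (hS : S.IsHermitian) (r : ℝ) : mpow S r = (hS.eigenvectorUnitary : Matrix (Fin d) (Fin d) ℂ) *
      Matrix.diagonal (fun i => ((pw (hS.eigenvalues i) r : ℝ) : ℂ)) *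
      (star (hS.eigenvectorUnitary : Matrix (Fin d) (Fin d) ℂ)) := by
  unfold mpow pw; rw [dif_pos hS]

lemma pw_nonneg {x : ℝ} (hx : 0 ≤ x) (r : ℝ) : 0 ≤ pw x r := by
  unfold pw; split_ifs; exacts [le_rfl, Real.rpow_nonneg hx r]

lemma mpow_psd (hS : S.PosSemidef) (r : ℝ) : (mpow S r).PosSemidef := by
  rw [mpow_def' hS.1]
  apply Matrix.PosSemidef.mul_mul_conjTranspose_same
  refine Matrix.PosSemidef.diagonal fun i => ?_
  simpa using pw_nonneg (hS.eigenvalues_nonneg i) r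

lemma trace_mpow (hS : S.IsHermitian) (hF : F.IsHermitian) (r t : ℝ) :
    (mpow S r * mpow F t).trace.re =
      ∑ k : Fin d × Fin d, pw (hS.eigenvalues k.1) r * pw (hF.eigenvalues k.2) t * ov hS hF k := by
  rw [mpow_def' hF t, trace_conj_diag, Fintype.sum_prod_type_right]
  apply Finset.sum_congr rfl; intro j _
  set U := (hS.eigenvectorUnitary : Matrix (Fin d) (Fin d) ℂ) with hU
  set W := (hF.eigenvectorUnitary : Matrix (Fin d) (Fin d) ℂ) with hW
  have e : star W * mpow S r * W = star (star U * W) * (diagonal (fun i => ((pw (hS.eigenvalues i) r : ℝ) : ℂ)) * (star U * W)) := by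
    rw [mpow_def' hS r]; simp only [star_mul, star_star]; noncomm_ring
  rw [e, Matrix.mul_apply, Complex.re_sum, Finset.mul_sum]
  apply Finset.sum_congr rfl; intro i _
  have : ov hS hF (i, j) = Complex.normSq ((star U * W) i j) := rfl
  rw [this, Matrix.diagonal_mul, Matrix.star_apply, Complex.star_def, mul_left_comm, mul_comm (starRingEnd ℂ _), Complex.mul_conj,
    ← Complex.ofReal_mul, Complex.ofReal_re]
  ring

def pL (hS : S.IsHermitian) (hF : F.IsHermitian) (k : Fin d × Fin d) : ℝ := hS.eigenvalues k.1 * ov hS hF k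
def bL (hS : S.IsHermitian) (hF : F.IsHermitian) (k : Fin d × Fin d) : ℝ :=
  Real.log (hF.eigenvalues k.2) - Real.log (hS.eigenvalues k.1)

lemma pL_nonneg (hS : S.PosSemidef) (hF : F.IsHermitian) (k) : 0 ≤ pL hS.1 hF k :=
  mul_nonneg (hS.eigenvalues_nonneg _) (ov_nonneg _ _ _)

lemma pL_sum (hS : S.IsHermitian) (hF : F.IsHermitian) (h1 : S.trace = 1) : ∑ k, pL hS hF k = 1 := by
  rw [Fintype.sum_prod_type]
  simp only [pL, ← Finset.mul_sum, ov_row, mul_one]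
  exact eig_sum hS h1

lemma qL_sum (hS : S.IsHermitian) (hF : F.IsHermitian) (h1 : F.trace = 1) :
    ∑ k : Fin d × Fin d, hF.eigenvalues k.2 * ov hS hF k = 1 := by
  rw [Fintype.sum_prod_type_right]
  simp only [← Finset.mul_sum, ov_col, mul_one]
  exact eig_sum hF h1

lemma trace_eq_Zf (hS : S.PosSemidef) (hF : F.PosSemidef) (hF' : ∀ j, 0 < hF.1.eigenvalues j) (s : ℝ) :
    (mpow S (1 - s) * mpow F s).trace.re = Zf (pL hS.1 hF.1) (bL hS.1 hF.1) s := by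
  rw [trace_mpow hS.1 hF.1, Zf]
  apply Finset.sum_congr rfl; intro k _
  unfold pL bL pw
  have hμ := hF' k.2
  rw [if_neg hμ.ne']
  by_cases h : hS.1.eigenvalues k.1 = 0
  · simp [h]
  · have hl : 0 < hS.1.eigenvalues k.1 := lt_of_le_of_ne (hS.eigenvalues_nonneg _) (Ne.symm h)
    rw [if_neg h, Real.rpow_def_of_pos hl, Real.rpow_def_of_pos hμ]
    nth_rewrite 2 [← Real.exp_log hl]
    rw [← Real.exp_add, mul_right_comm, ← Real.exp_add]
    congr 2; ring

lemma qL_ge (hS : S.PosSemidef) (hF : F.PosSemidef) (hF' : ∀ j, 0 < hF.1.eigenvalues j) (k) :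
    pL hS.1 hF.1 k * Real.exp (bL hS.1 hF.1 k) ≤ hF.1.eigenvalues k.2 * ov hS.1 hF.1 k := by
  unfold pL bL
  by_cases h : hS.1.eigenvalues k.1 = 0
  · simp only [h, zero_mul]; exact mul_nonneg (hF' _).le (ov_nonneg _ _ _)
  · have hl : 0 < hS.1.eigenvalues k.1 := lt_of_le_of_ne (hS.eigenvalues_nonneg _) (Ne.symm h)
    rw [Real.exp_sub, Real.exp_log hl, Real.exp_log (hF' _)]
    apply le_of_eq; field_simp

lemma pw_mul_le {x y s : ℝ} (hx : 0 ≤ x) (hy : 0 ≤ y) (hs : 0 < s) (hs1 : s < 1) :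
    pw x (1 - s) * pw y s ≤ (1 - s) * x + s * y := by
  have h1 : pw x (1 - s) = x ^ (1 - s) := by
    unfold pw; split_ifs with h
    · rw [h, Real.zero_rpow (by linarith)]
    · rfl
  have h2 : pw y s = y ^ s := by
    unfold pw; split_ifs with h
    · rw [h, Real.zero_rpow (by linarith)]
    · rfl
  rw [h1, h2]
  exact Real.geom_mean_le_arith_mean2_weighted (by linarith) hs.le hx hy (by ring)

lemma trace_le_one (hS : IsDensity S) (hF : IsDensity F) {s : ℝ} (hs : 0 < s) (hs1 : s < 1) :
    (mpow S (1 - s) * mpow F s).trace.re ≤ 1 := by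
  rw [trace_mpow hS.1.1 hF.1.1]
  have : ∀ k : Fin d × Fin d, pw (hS.1.1.eigenvalues k.1) (1 - s) * pw (hF.1.1.eigenvalues k.2) s * ov hS.1.1 hF.1.1 k
      ≤ (1 - s) * pL hS.1.1 hF.1.1 k + s * (hF.1.1.eigenvalues k.2 * ov hS.1.1 hF.1.1 k) := by
    intro k
    have := mul_le_mul_of_nonneg_right (pw_mul_le (hS.1.eigenvalues_nonneg k.1) (hF.1.eigenvalues_nonneg k.2) hs hs1)
      (ov_nonneg hS.1.1 hF.1.1 k)
    unfold pL; linarith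
  refine (Finset.sum_le_sum fun k _ => this k).trans ?_
  rw [Finset.sum_add_distrib, ← Finset.mul_sum, ← Finset.mul_sum, pL_sum _ _ hS.2, qL_sum _ _ hF.2]
  linarith

/-- The set of density operators bounded below by `δ`. -/
def Kset (d : ℕ) (δ : ℝ) : Set (Matrix (Fin d) (Fin d) ℂ) := {F | IsDensity F ∧ (F - (δ : ℂ) • 1).PosSemidef}

lemma Kset_eig {δ : ℝ} (hF : F ∈ Kset d δ) (j : Fin d) : δ ≤ hF.1.1.1.eigenvalues j := by
  have h := hF.2.conjTranspose_mul_mul_same (hF.1.1.1.eigenvectorUnitary : Matrix (Fin d) (Fin d) ℂ)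
  have h2 := h.diag_nonneg (i := j)
  have e : (hF.1.1.1.eigenvectorUnitary : Matrix (Fin d) (Fin d) ℂ)ᴴ * (F - (δ : ℂ) • 1) *
      (hF.1.1.1.eigenvectorUnitary : Matrix (Fin d) (Fin d) ℂ) =
      diagonal (fun i => (hF.1.1.1.eigenvalues i : ℂ)) - (δ : ℂ) • 1 := by
    have hu : (hF.1.1.1.eigenvectorUnitary : Matrix (Fin d) (Fin d) ℂ)ᴴ * (hF.1.1.1.eigenvectorUnitary : Matrix (Fin d) (Fin d) ℂ) = 1 :=
      Unitary.coe_star_mul_self _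
    have he := herm_eq hF.1.1.1
    set U := (hF.1.1.1.eigenvectorUnitary : Matrix (Fin d) (Fin d) ℂ)
    set Dg := diagonal (fun i => (hF.1.1.1.eigenvalues i : ℂ))
    have : Uᴴ * F * U = Dg := by
      rw [he, star_eq_conjTranspose]
      calc _ = (Uᴴ * U) * Dg * (Uᴴ * U) := by noncomm_ring
        _ = _ := by rw [hu]; simp
    rw [Matrix.mul_sub, Matrix.sub_mul, this, Matrix.mul_smul, Matrix.smul_mul, Matrix.mul_one, hu]
  rw [e] at h2
  simp only [Matrix.sub_apply, Matrix.diagonal_apply_eq, Matrix.smul_apply, Matrix.one_apply_eq, smul_eq_mul, mul_one] at h2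
  have := (Complex.le_def.1 h2).1
  simpa using this

lemma Kset_convex (d : ℕ) (δ : ℝ) : Convex ℝ (Kset d δ) := by
  intro F hF G hG a b ha hb hab
  refine ⟨⟨(hF.1.1.smul ha).add (hG.1.1.smul hb), ?_⟩, ?_⟩
  · rw [Matrix.trace_add, Matrix.trace_smul, Matrix.trace_smul, hF.1.2, hG.1.2]
    simp only [Complex.real_smul, mul_one]
    exact_mod_cast hab
  · have := (hF.2.smul ha).add (hG.2.smul hb)
    convert this using 1
    generalize (δ : ℂ) • (1 : Matrix (Fin d) (Fin d) ℂ) = D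
    have e : D = (a + b) • D := by rw [hab, one_smul]
    rw [smul_sub, smul_sub]; nth_rewrite 1 [e]; rw [add_smul]; abel

lemma mix_mem {δ : ℝ} (hd : d ≠ 0) (h0 : 0 ≤ δ) (h1 : δ ≤ 1) (hF : IsDensity F) :
    (1 - δ) • F + δ • (((d : ℝ)⁻¹ : ℝ) • (1 : Matrix (Fin d) (Fin d) ℂ)) ∈ Kset d (δ * (d : ℝ)⁻¹) := by
  have hdd : (d : ℂ) ≠ 0 := by exact_mod_cast hd
  refine ⟨⟨(hF.1.smul (by linarith)).add ((Matrix.PosSemidef.one.smul (by positivity)).smul h0), ?_⟩, ?_⟩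
  · rw [Matrix.trace_add, Matrix.trace_smul, Matrix.trace_smul, Matrix.trace_smul, hF.2, Matrix.trace_one]
    simp only [Complex.real_smul, Fintype.card_fin]
    push_cast
    field_simp
    ring
  · have : ((δ * (d : ℝ)⁻¹ : ℝ) : ℂ) • (1 : Matrix (Fin d) (Fin d) ℂ) = δ • (((d : ℝ)⁻¹ : ℝ) • (1 : Matrix (Fin d) (Fin d) ℂ)) := by
      rw [smul_smul, Complex.coe_smul]
    rw [this, add_sub_cancel_right]
    exact hF.1.smul (by linarith)

lemma bL_bound {δ : ℝ} (hδ : 0 < δ) (hS : IsDensity S) : ∃ B : ℝ, 0 ≤ B ∧ ∀ F (hF : F ∈ Kset d δ) k,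
    |bL hS.1.1 hF.1.1.1 k| ≤ B := by
  refine ⟨|Real.log δ| + ∑ i, |Real.log (hS.1.1.eigenvalues i)|, by positivity, fun F hF k => ?_⟩
  have h1 : |Real.log (hS.1.1.eigenvalues k.1)| ≤ ∑ i, |Real.log (hS.1.1.eigenvalues i)| :=
    Finset.single_le_sum (f := fun i => |Real.log (hS.1.1.eigenvalues i)|) (fun _ _ => abs_nonneg _) (Finset.mem_univ _)
  have hδμ := Kset_eig hF k.2
  have hμ1 : hF.1.1.1.eigenvalues k.2 ≤ 1 := by
    rw [← eig_sum hF.1.1.1 hF.1.2]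
    exact Finset.single_le_sum (f := hF.1.1.1.eigenvalues) (fun i _ => hF.1.1.eigenvalues_nonneg i) (Finset.mem_univ _)
  have h2 : |Real.log (hF.1.1.1.eigenvalues k.2)| ≤ |Real.log δ| := by
    have a := Real.log_le_log hδ hδμ
    have b := Real.log_nonpos (hδ.le.trans hδμ) hμ1
    rw [abs_of_nonpos b, abs_of_nonpos (a.trans b)]; linarith
  unfold bL
  exact (abs_sub _ _).trans (add_le_add h2 h1)

end letters

lemma minimax {V : Type*} [AddCommGroup V] [Module ℝ V] {N : ℕ} {K : Set V} (hK : Convex ℝ K)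
    (hne : K.Nonempty) (f : Fin N → V → ℝ) (hf : ∀ i, ConvexOn ℝ K (f i)) (η : ℝ)
    (h : ∀ w : Fin N → ℝ, (∀ i, 0 ≤ w i) → ∑ i, w i = 1 → ∃ F ∈ K, ∑ i, w i * f i F < η) :
    ∃ F ∈ K, ∀ i, f i F < η := by
  by_contra hcon
  push Not at hcon
  set C : Set (Fin N → ℝ) := {y | ∃ F ∈ K, ∀ i, f i F < y i} with hC
  have hCc : Convex ℝ C := by
    rintro y ⟨F, hF, hy⟩ z ⟨G, hG, hz⟩ a b ha hb hab
    refine ⟨a • F + b • G, hK hF hG ha hb hab, fun i => ?_⟩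
    have h1 := (hf i).2 hF hG ha hb hab
    refine lt_of_le_of_lt h1 ?_
    simp only [smul_eq_mul, Pi.add_apply, Pi.smul_apply]
    rcases ha.eq_or_lt with h0 | h0
    · have : b = 1 := by linarith
      subst this; rw [← h0]; simpa using hz i
    · have := mul_lt_mul_of_pos_left (hy i) h0
      have := mul_le_mul_of_nonneg_left (hz i).le hb
      linarith
  have hCo : IsOpen C := by
    have : C = ⋃ F ∈ K, ⋂ i, {y : Fin N → ℝ | f i F < y i} := by
      ext y; simp [hC]
    rw [this]
    refine isOpen_biUnion fun F _ => isOpen_iInter_of_finite fun i => isOpen_lt continuous_const (continuous_apply i)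
  have hη : (fun _ => η) ∉ C := by
    rintro ⟨F, hF, h1⟩
    obtain ⟨i, hi⟩ := hcon F hF
    exact absurd (h1 i) (not_lt.2 hi)
  obtain ⟨φ, hφ⟩ := geometric_hahn_banach_open_point hCc hCo hη
  have hφe : ∀ y : Fin N → ℝ, φ y = ∑ i, y i * φ (Pi.single i 1) := by
    intro y
    conv_lhs => rw [pi_eq_sum_univ' y]
    rw [map_sum]
    apply Finset.sum_congr rfl; intro i _
    rw [map_smul, smul_eq_mul]
  set w : Fin N → ℝ := fun i => - φ (Pi.single i 1) with hw
  have key : ∀ F ∈ K, ∀ t : Fin N → ℝ, (∀ i, 0 < t i) → η * ∑ i, w i < ∑ i, (f i F + t i) * w i := by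
    intro F hF t ht
    have := hφ (fun i => f i F + t i) ⟨F, hF, fun i => by linarith [ht i]⟩
    rw [hφe, hφe (fun _ => η)] at this
    rw [Finset.mul_sum]
    simp only [hw, mul_neg, Finset.sum_neg_distrib]
    linarith
  obtain ⟨F0, hF0⟩ := hne
  have hw0 : ∀ i, 0 ≤ w i := by
    intro i
    by_contra hi
    push Not at hi
    have hh : ∀ T : ℝ, 0 < T → η * ∑ j, w j < ∑ j, (f j F0 + 1) * w j + T * w i := by
      intro T hT
      have := key F0 hF0 (fun j => 1 + if j = i then T else 0) (fun j => by
        split_ifs <;> linarith)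
      refine this.trans_eq ?_
      have e : ∀ j, (f j F0 + (1 + if j = i then T else 0)) * w j = (f j F0 + 1) * w j + if j = i then T * w j else 0 := by
        intro j; split_ifs <;> ring
      simp only [e, Finset.sum_add_distrib, Finset.sum_ite_eq', Finset.mem_univ, if_true]
    set D := ∑ j, (f j F0 + 1) * w j - η * ∑ j, w j with hD
    have := hh ((|D| + 1) / (- w i)) (by apply div_pos; positivity; linarith)
    have e : (|D| + 1) / (- w i) * w i = -(|D| + 1) := by
      have : w i ≠ 0 := hi.ne
      field_simp
    rw [e] at this
    have := le_abs_self D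
    linarith
  have hwle : ∀ F ∈ K, η * ∑ i, w i ≤ ∑ i, w i * f i F := by
    intro F hF
    by_contra hlt
    push Not at hlt
    set D := η * ∑ i, w i - ∑ i, w i * f i F with hD
    have hDp : 0 < D := by linarith
    have hs : 0 ≤ ∑ i, w i := Finset.sum_nonneg fun i _ => hw0 i
    have := key F hF (fun _ => D / (∑ i, w i + 1)) (fun _ => by positivity)
    simp only [add_mul, Finset.sum_add_distrib, ← Finset.mul_sum] at this
    have e : D / (∑ i, w i + 1) * ∑ i, w i ≤ D := by
      rw [div_mul_eq_mul_div, div_le_iff₀ (by linarith)]; nlinarith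
    have e2 : ∑ i, f i F * w i = ∑ i, w i * f i F := Finset.sum_congr rfl fun i _ => mul_comm _ _
    linarith
  have hws : 0 < ∑ i, w i := by
    refine lt_of_le_of_ne (Finset.sum_nonneg fun i _ => hw0 i) fun h0 => ?_
    have := key F0 hF0 (fun _ => 1) (fun _ => one_pos)
    have hz := (Finset.sum_eq_zero_iff_of_nonneg (fun i _ => hw0 i)).1 h0.symm
    rw [← h0, Finset.sum_eq_zero (fun i hi => by rw [hz i hi, mul_zero])] at this
    simp at this
  obtain ⟨F, hF, hlt⟩ := h (fun i => w i / ∑ j, w j) (fun i => div_nonneg (hw0 i) hws.le)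
    (by rw [← Finset.sum_div, div_self hws.ne'])
  have h3 := hwle F hF
  have : ∑ i, w i / (∑ j, w j) * f i F = (∑ i, w i * f i F) / ∑ j, w j := by
    rw [Finset.sum_div]; apply Finset.sum_congr rfl; intro i _; ring
  rw [this, div_lt_iff₀ hws] at hlt
  linarith

section extraction
variable {d : ℕ}

def gf (S F : Matrix (Fin d) (Fin d) ℂ) (s : ℝ) : ℝ := (mpow S (1 - s) * mpow F s).trace.re

lemma negLog_nonneg {t : ℝ} (ht : t ≤ 1) : 0 ≤ negLog t := by
  unfold negLog
  split_ifs with h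
  · exact le_top
  · push Not at h
    have := Real.log_nonpos h.le ht
    exact_mod_cast (by linarith : (0:ℝ) ≤ -Real.log t)

lemma ereal_coe_sum {ι : Type*} (s : Finset ι) (f : ι → ℝ) :
    ((∑ i ∈ s, f i : ℝ) : EReal) = ∑ i ∈ s, ((f i : ℝ) : EReal) := by
  classical
  induction s using Finset.induction_on with
  | empty => simp
  | insert a s ha ih => rw [Finset.sum_insert ha, Finset.sum_insert ha, EReal.coe_add, ih]

lemma ereal_sum_lt_top {ι : Type*} [Fintype ι] (p : ι → ℝ) (e : ι → EReal) (hp : ∀ i, 0 ≤ p i)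
    (he : ∀ i, 0 ≤ e i) (h : ∑ i, ((p i : ℝ) : EReal) * e i < ⊤) :
    (∀ i, 0 < p i → e i ≠ ⊤) ∧ ∑ i, ((p i : ℝ) : EReal) * e i = ((∑ i, p i * (e i).toReal : ℝ) : EReal) := by
  have h0 : ∀ i, (0 : EReal) ≤ ((p i : ℝ) : EReal) * e i := fun i =>
    mul_nonneg (by exact_mod_cast hp i) (he i)
  have h1 : ∀ i, 0 < p i → e i ≠ ⊤ := by
    intro i hi hei
    have : ((p i : ℝ) : EReal) * e i ≤ ∑ i, ((p i : ℝ) : EReal) * e i :=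
      Finset.single_le_sum (f := fun i => ((p i : ℝ) : EReal) * e i) (fun j _ => h0 j) (Finset.mem_univ i)
    rw [hei, EReal.coe_mul_top_of_pos hi] at this
    exact absurd h (not_lt.2 this)
  refine ⟨h1, ?_⟩
  rw [ereal_coe_sum]
  apply Finset.sum_congr rfl
  intro i _
  rcases (hp i).eq_or_lt with h2 | h2
  · rw [← h2]; simp
  · rw [EReal.coe_mul, EReal.coe_toReal (h1 i h2) (ne_of_gt (lt_of_lt_of_le (by exact EReal.bot_lt_zero) (he i)))]

lemma extract {A X : Type*} [Fintype A] [DecidableEq A] [Fintype X] [DecidableEq X]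
    (S : A → X → Matrix (Fin d) (Fin d) ℂ) (hS : ∀ a x, IsDensity (S a x))
    (P : A → ℝ) (hP : IsProbDist P) (V : A → X → ℝ) (hV : ∀ a, IsProbDist (V a))
    (R' E : ℝ) (hE : EspccCond S R' P V < (E : EReal)) {s : ℝ} (hs : 0 < s) (hs1 : s < 1)
    (F0 : Matrix (Fin d) (Fin d) ℂ) (hF0 : IsDensity F0) :
    ∃ F : A → Matrix (Fin d) (Fin d) ℂ, (∀ a, IsDensity (F a)) ∧
      (∀ a x, 0 < P a → 0 < V a x → 0 < gf (S a x) (F a) s) ∧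
      ∑ a, P a * ∑ x, V a x * (- Real.log (gf (S a x) (F a) s)) < s * R' + (1 - s) * E := by
  have hs' : 0 < 1 - s := by linarith
  set ρ : ℝ := s / (1 - s) with hρ
  have hρ0 : 0 ≤ ρ := by positivity
  have e1 : 1 + ρ = (1 - s)⁻¹ := by rw [hρ]; field_simp; ring
  have e2 : 1 / (1 + ρ) = 1 - s := by rw [e1]; field_simp
  have e3 : ρ / (1 + ρ) = s := by rw [e1, hρ]; field_simp
  have h1 : (∑ a, ((P a : ℝ) : EReal) * E0cc (S a) ρ (V a)) - ((ρ * R' : ℝ) : EReal) < (E : EReal) :=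
    lt_of_le_of_lt (le_iSup (fun ρ : {ρ : ℝ // 0 ≤ ρ} =>
      (∑ a, ((P a : ℝ) : EReal) * E0cc (S a) ρ.1 (V a)) - ((ρ.1 * R' : ℝ) : EReal)) ⟨ρ, hρ0⟩) hE
  have h2 : (∑ a, ((P a : ℝ) : EReal) * E0cc (S a) ρ (V a)) < ((E + ρ * R' : ℝ) : EReal) := by
    rw [EReal.coe_add]
    exact (EReal.sub_lt_iff (Or.inl (EReal.coe_ne_bot _)) (Or.inl (EReal.coe_ne_top _))).1 h1
  have hnl : ∀ a x (F : Matrix (Fin d) (Fin d) ℂ), IsDensity F → 0 ≤ negLog (gf (S a x) F s) := fun a x F hF =>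
    negLog_nonneg (trace_le_one (hS a x) hF hs hs1)
  have hE0 : ∀ a, E0cc (S a) ρ (V a) = ⨅ F : {F : Matrix (Fin d) (Fin d) ℂ // IsDensity F},
    (((1 - s)⁻¹ : ℝ) : EReal) * ∑ x, ((V a x : ℝ) : EReal) * negLog (gf (S a x) F.1 s) := by
    intro a; unfold E0cc gf; rw [e2, e3, e1]
  have hE0n : ∀ a, 0 ≤ E0cc (S a) ρ (V a) := by
    intro a; rw [hE0]
    refine le_iInf fun F => mul_nonneg (by exact_mod_cast (inv_pos.2 hs').le) ?_
    exact Finset.sum_nonneg fun x _ => mul_nonneg (by exact_mod_cast (hV a).1 x) (hnl a x F.1 F.2)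
  obtain ⟨hfin, hsum⟩ := ereal_sum_lt_top P (fun a => E0cc (S a) ρ (V a)) hP.1 hE0n (h2.trans (EReal.coe_lt_top _))
  rw [hsum] at h2
  have h3 : ∑ a, P a * (E0cc (S a) ρ (V a)).toReal < E + ρ * R' := by exact_mod_cast h2
  set γ := E + ρ * R' - ∑ a, P a * (E0cc (S a) ρ (V a)).toReal with hγ
  have hγ0 : 0 < γ := by linarith
  have hch : ∀ a, ∃ F : Matrix (Fin d) (Fin d) ℂ, IsDensity F ∧ (0 < P a →
      (∀ x, 0 < V a x → 0 < gf (S a x) F s) ∧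
      (1 - s)⁻¹ * ∑ x, V a x * (- Real.log (gf (S a x) F s)) < (E0cc (S a) ρ (V a)).toReal + γ) := by
    intro a
    by_cases hPa : 0 < P a
    swap
    · exact ⟨F0, hF0, fun h => absurd h hPa⟩
    have hlt : E0cc (S a) ρ (V a) < (((E0cc (S a) ρ (V a)).toReal + γ : ℝ) : EReal) := by
      conv_lhs => rw [← EReal.coe_toReal (hfin a hPa) (ne_of_gt (lt_of_lt_of_le (by exact EReal.bot_lt_zero) (hE0n a)))]
      exact_mod_cast (by linarith)
    nth_rewrite 1 [hE0 a] at hlt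
    obtain ⟨F, hF⟩ := iInf_lt_iff.1 hlt
    refine ⟨F.1, F.2, fun _ => ?_⟩
    have hsl : ∑ x, ((V a x : ℝ) : EReal) * negLog (gf (S a x) F.1 s) < ⊤ := by
      rw [lt_top_iff_ne_top]
      intro htop
      rw [htop, EReal.coe_mul_top_of_pos (inv_pos.2 hs')] at hF
      exact absurd hF (not_lt.2 le_top)
    obtain ⟨hfx, hsx⟩ := ereal_sum_lt_top (V a) (fun x => negLog (gf (S a x) F.1 s)) (hV a).1
      (fun x => hnl a x F.1 F.2) hsl
    have hpos : ∀ x, 0 < V a x → 0 < gf (S a x) F.1 s := by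
      intro x hx
      by_contra hn
      exact hfx x hx (by unfold negLog; rw [if_pos (not_lt.1 hn)])
    refine ⟨hpos, ?_⟩
    rw [hsx, ← EReal.coe_mul] at hF
    have hF2 := EReal.coe_lt_coe_iff.1 hF
    refine lt_of_le_of_lt (le_of_eq ?_) hF2
    congr 1
    apply Finset.sum_congr rfl
    intro x _
    rcases ((hV a).1 x).eq_or_lt with h | h
    · rw [← h]; simp
    · unfold negLog; rw [if_neg (not_le.2 (hpos x h)), EReal.toReal_coe]
  choose F hF hF2 using hch
  refine ⟨F, hF, fun a x ha => (hF2 a ha).1 x, ?_⟩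
  have hlt : ∑ a, P a * ((1 - s)⁻¹ * ∑ x, V a x * (- Real.log (gf (S a x) (F a) s))) <
      ∑ a, P a * ((E0cc (S a) ρ (V a)).toReal + γ) := by
    apply Finset.sum_lt_sum
    · intro a _
      rcases (hP.1 a).eq_or_lt with h | h
      · rw [← h]; simp
      · exact mul_le_mul_of_nonneg_left (hF2 a h).2.le h.le
    · obtain ⟨a, ha, ha2⟩ := Finset.exists_lt_of_sum_lt (s := Finset.univ) (f := fun _ => (0:ℝ)) (g := P)
        (by rw [hP.2]; simp)
      exact ⟨a, ha, mul_lt_mul_of_pos_left (hF2 a ha2).2 ha2⟩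
  simp only [mul_add, Finset.sum_add_distrib, ← Finset.sum_mul, hP.2] at hlt
  have e4 : ∑ a, P a * ((1 - s)⁻¹ * ∑ x, V a x * (- Real.log (gf (S a x) (F a) s))) =
     (1 - s)⁻¹ * ∑ a, P a * ∑ x, V a x * (- Real.log (gf (S a x) (F a) s)) := by
    rw [Finset.mul_sum]; apply Finset.sum_congr rfl; intro a _; ring
  rw [e4] at hlt
  have h5 : (1 - s)⁻¹ * ∑ a, P a * ∑ x, V a x * (- Real.log (gf (S a x) (F a) s)) < E + ρ * R' := by
    rw [hγ] at hlt; linarith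
  rw [inv_mul_lt_iff₀ hs'] at h5
  refine h5.trans_eq ?_
  rw [hρ]; field_simp; ring

end extraction

section findF
variable {d : ℕ}

lemma gf_eq {S F : Matrix (Fin d) (Fin d) ℂ} {δ : ℝ} (hδ : 0 < δ) (hS : IsDensity S) (hF : F ∈ Kset d δ) (s : ℝ) :
    gf S F s = Zf (pL hS.1.1 hF.1.1.1) (bL hS.1.1 hF.1.1.1) s :=
  trace_eq_Zf hS.1 hF.1.1 (fun j => hδ.trans_le (Kset_eig hF j)) s

lemma gf_pos {S F : Matrix (Fin d) (Fin d) ℂ} {δ : ℝ} (hδ : 0 < δ) (hS : IsDensity S) (hF : F ∈ Kset d δ) (s : ℝ) :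
    0 < gf S F s := by
  rw [gf_eq hδ hS hF]
  exact Zf_pos (pL_nonneg hS.1 _) (by rw [pL_sum _ _ hS.2]; exact one_pos) s

lemma log_gf_concave {S F G : Matrix (Fin d) (Fin d) ℂ} {δ : ℝ} (hδ : 0 < δ) (hS : IsDensity S) (hF : F ∈ Kset d δ)
    (hG : G ∈ Kset d δ) {s a b : ℝ} (hs : 0 < s) (hs1 : s < 1) (ha : 0 ≤ a) (hb : 0 ≤ b) (hab : a + b = 1) :
    a * Real.log (gf S F s) + b * Real.log (gf S G s) ≤ Real.log (gf S (a • F + b • G) s) := by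
  have h1 := mpow_concave (mpow_psd hS.1 (1 - s)) hF.1.1 hG.1.1 hs hs1 ha hb hab
  have p1 := gf_pos hδ hS hF s
  have p2 := gf_pos hδ hS hG s
  have h2 := strictConcaveOn_log_Ioi.concaveOn.2 p1 p2 ha hb hab
  simp only [smul_eq_mul] at h2
  refine h2.trans (Real.log_le_log ?_ h1)
  exact (convex_Ioi (0:ℝ)) p1 p2 ha hb hab

lemma log_gf_mix {S F G : Matrix (Fin d) (Fin d) ℂ} {δ : ℝ} (h0 : 0 ≤ δ) (h1 : δ < 1) (hS : IsDensity S) (hF : IsDensity F)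
    (hG : G.PosSemidef) {s : ℝ} (hs : 0 < s) (hs1 : s < 1) (hp : 0 < gf S F s) :
    Real.log (1 - δ) + Real.log (gf S F s) ≤ Real.log (gf S ((1 - δ) • F + δ • G) s) := by
  have hc := mpow_concave (mpow_psd hS.1 (1 - s)) hF.1 hG hs hs1 (by linarith : 0 ≤ 1 - δ) h0 (by ring)
  have hn := trace_mul_re_nonneg (mpow_psd hS.1 (1 - s)) (mpow_psd hG s)
  rw [← Real.log_mul (by linarith) hp.ne']
  apply Real.log_le_log (mul_pos (by linarith) hp)
  refine le_trans ?_ hc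
  have := mul_nonneg h0 hn
  unfold gf
  linarith

lemma findF {A X : Type*} [Fintype A] [DecidableEq A] [Fintype X] [DecidableEq X]
    (S : A → X → Matrix (Fin d) (Fin d) ℂ) (hS : ∀ a x, IsDensity (S a x))
    (P : A → ℝ) (hP : IsProbDist P) (V : A → X → ℝ) (hV : ∀ a, IsProbDist (V a))
    (R' E : ℝ) (hE : EspccCond S R' P V < (E : EReal)) (η : ℝ) (hη : 0 < η) :
    ∃ δ > 0, ∃ (F : A → Matrix (Fin d) (Fin d) ℂ) (hF : ∀ a, F a ∈ Kset d δ),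
      ∀ t ∈ Set.Icc (0:ℝ) 1, - t * R' - (1 - t) * E - 2 * η ≤
        ∑ l : A × X, (P l.1 * V l.1 l.2) *
          Real.log (Zf (pL (hS l.1 l.2).1.1 (hF l.1).1.1.1) (bL (hS l.1 l.2).1.1 (hF l.1).1.1.1) t) := by
  classical
  have hA : Nonempty A := by
    by_contra h
    rw [not_nonempty_iff] at h
    have := hP.2; simp at this
  obtain ⟨a0⟩ := hA
  have hX : Nonempty X := by
    by_contra h
    rw [not_nonempty_iff] at h
    have := (hV a0).2; simp at this
  obtain ⟨x0⟩ := hX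
  have hd : d ≠ 0 := by
    rintro rfl
    have := (hS a0 x0).2
    simp [Matrix.trace] at this
  have hw0 : ∀ l : A × X, 0 ≤ P l.1 * V l.1 l.2 := fun l => mul_nonneg (hP.1 _) ((hV _).1 _)
  have hw1 : ∑ l : A × X, P l.1 * V l.1 l.2 = 1 := by
    rw [Fintype.sum_prod_type]
    simp only [← Finset.mul_sum, (hV _).2, mul_one, hP.2]
  set κ : ℝ := 1 - Real.exp (-(η / 2)) with hκ
  have hκ1 : κ < 1 := by rw [hκ]; linarith [Real.exp_pos (-(η / 2))]
  have hκ0 : 0 < κ := by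
    rw [hκ]; have : Real.exp (-(η / 2)) < 1 := by rw [Real.exp_lt_one_iff]; linarith
    linarith
  have hκl : Real.log (1 - κ) = -(η / 2) := by rw [hκ]; simp
  set δ : ℝ := κ * (d : ℝ)⁻¹ with hδ
  have hδ0 : 0 < δ := by
    have : (0:ℝ) < d := by exact_mod_cast Nat.pos_of_ne_zero hd
    positivity
  -- uniform bound
  have hB : ∃ B : ℝ, 0 ≤ B ∧ ∀ (l : A × X) F (hF : F ∈ Kset d δ) k, |bL (hS l.1 l.2).1.1 hF.1.1.1 k| ≤ B := by
    choose Bf hBf0 hBf using fun l : A × X => bL_bound hδ0 (hS l.1 l.2)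
    refine ⟨∑ l, Bf l, Finset.sum_nonneg fun l _ => hBf0 l, fun l F hF k => (hBf l F hF k).trans ?_⟩
    exact Finset.single_le_sum (f := Bf) (fun l _ => hBf0 l) (Finset.mem_univ l)
  obtain ⟨B, hB0, hB⟩ := hB
  obtain ⟨N0, hN0⟩ := exists_nat_gt ((B + |R'| + |E|) / η)
  set N := N0 + 1 with hN
  have hNpos : (0:ℝ) < N := by rw [hN]; positivity
  have hNB : (B + |R'| + |E|) * (1 / N) ≤ η := by
    have : (B + |R'| + |E|) / η < N := hN0.trans (by rw [hN]; push_cast; linarith)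
    rw [div_lt_iff₀ hη] at this
    rw [mul_one_div, div_le_iff₀ hNpos]; linarith
  set sg : Fin N → ℝ := fun i => ((i : ℕ) + 1 : ℝ) / (N + 1) with hsg
  have hsg0 : ∀ i, 0 < sg i := fun i => by rw [hsg]; positivity
  have hsg1 : ∀ i, sg i < 1 := fun i => by
    rw [hsg]; show ((i : ℕ) + 1 : ℝ) / (N + 1) < 1
    rw [div_lt_one (by positivity)]
    have : ((i : ℕ) : ℝ) < N := by exact_mod_cast i.2
    linarith
  set K : Set (A → Matrix (Fin d) (Fin d) ℂ) := {F | ∀ a, F a ∈ Kset d δ} with hK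
  set f : ℝ → (A → Matrix (Fin d) (Fin d) ℂ) → ℝ := fun s F =>
    -(∑ l : A × X, (P l.1 * V l.1 l.2) * Real.log (gf (S l.1 l.2) (F l.1) s)) - s * R' - (1 - s) * E with hf
  have hKc : Convex ℝ K := fun F hF G hG a b ha hb hab c => Kset_convex d δ (hF c) (hG c) ha hb hab
  have hmain : ∃ F ∈ K, ∀ i, f (sg i) F < η := by
    refine minimax hKc ?_ (fun i => f (sg i)) ?_ η ?_
    · exact ⟨_, fun a => mix_mem hd hκ0.le hκ1.le (hS a x0)⟩
    · intro i
      refine ⟨hKc, fun F hF G hG a b ha hb hab => ?_⟩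
      simp only [hf, smul_eq_mul, Pi.add_apply, Pi.smul_apply]
      have : ∑ l : A × X, (P l.1 * V l.1 l.2) * (a * Real.log (gf (S l.1 l.2) (F l.1) (sg i)) +
          b * Real.log (gf (S l.1 l.2) (G l.1) (sg i))) ≤
          ∑ l : A × X, (P l.1 * V l.1 l.2) * Real.log (gf (S l.1 l.2) (a • F l.1 + b • G l.1) (sg i)) :=
        Finset.sum_le_sum fun l _ => mul_le_mul_of_nonneg_left
          (log_gf_concave hδ0 (hS l.1 l.2) (hF l.1) (hG l.1) (hsg0 i) (hsg1 i) ha hb hab) (hw0 l)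
      have e : ∑ l : A × X, (P l.1 * V l.1 l.2) * (a * Real.log (gf (S l.1 l.2) (F l.1) (sg i)) +
          b * Real.log (gf (S l.1 l.2) (G l.1) (sg i))) =
          a * ∑ l : A × X, (P l.1 * V l.1 l.2) * Real.log (gf (S l.1 l.2) (F l.1) (sg i)) +
          b * ∑ l : A × X, (P l.1 * V l.1 l.2) * Real.log (gf (S l.1 l.2) (G l.1) (sg i)) := by
        rw [Finset.mul_sum, Finset.mul_sum, ← Finset.sum_add_distrib]
        apply Finset.sum_congr rfl; intro l _; ring
      rw [e] at this
      have hb' : b = 1 - a := by linarith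
      rw [hb'] at this ⊢
      linarith
    · intro c hc0 hc1
      set sb : ℝ := ∑ i, c i * sg i with hsb
      obtain ⟨i0, -, hi0⟩ := Finset.exists_lt_of_sum_lt (s := Finset.univ) (f := fun _ => (0:ℝ)) (g := c)
        (by rw [hc1]; simp)
      have hsb0 : 0 < sb := Finset.sum_pos' (fun i _ => mul_nonneg (hc0 i) (hsg0 i).le)
        ⟨i0, Finset.mem_univ _, mul_pos hi0 (hsg0 i0)⟩
      have hsb1 : sb < 1 := by
        rw [← hc1, hsb]
        exact Finset.sum_lt_sum (fun i _ => mul_le_of_le_one_right (hc0 i) (hsg1 i).le)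
          ⟨i0, Finset.mem_univ _, mul_lt_of_lt_one_right hi0 (hsg1 i0)⟩
      obtain ⟨F1, hF1, hpos, hlt⟩ := extract S hS P hP V hV R' E hE hsb0 hsb1 (S a0 x0) (hS a0 x0)
      set F : A → Matrix (Fin d) (Fin d) ℂ := fun a =>
        (1 - κ) • F1 a + κ • (((d : ℝ)⁻¹ : ℝ) • (1 : Matrix (Fin d) (Fin d) ℂ)) with hF
      have hFK : F ∈ K := fun a => mix_mem hd hκ0.le hκ1.le (hF1 a)
      have hI : (((d : ℝ)⁻¹ : ℝ) • (1 : Matrix (Fin d) (Fin d) ℂ)).PosSemidef :=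
        Matrix.PosSemidef.one.smul (by positivity)
      refine ⟨F, hFK, ?_⟩
      have hfs : f sb F < η := by
        have h1 : ∑ l : A × X, (P l.1 * V l.1 l.2) * (-(η / 2) + Real.log (gf (S l.1 l.2) (F1 l.1) sb)) ≤
            ∑ l : A × X, (P l.1 * V l.1 l.2) * Real.log (gf (S l.1 l.2) (F l.1) sb) := by
          apply Finset.sum_le_sum
          intro l _
          rcases (hw0 l).eq_or_lt with h | h
          · rw [← h]; simp
          · apply mul_le_mul_of_nonneg_left _ h.le
            have hP0 : 0 < P l.1 := lt_of_le_of_ne (hP.1 _) (fun h' => by rw [← h'] at h; simp at h)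
            have hV0 : 0 < V l.1 l.2 := lt_of_le_of_ne ((hV _).1 _) (fun h' => by rw [← h'] at h; simp at h)
            rw [← hκl]
            exact log_gf_mix hκ0.le hκ1 (hS l.1 l.2) (hF1 l.1) hI hsb0 hsb1 (hpos _ _ hP0 hV0)
        have e1 : ∑ l : A × X, (P l.1 * V l.1 l.2) * (-(η / 2) + Real.log (gf (S l.1 l.2) (F1 l.1) sb)) =
            -(η / 2) - ∑ a, P a * ∑ x, V a x * (- Real.log (gf (S a x) (F1 a) sb)) := by
          simp only [mul_add, Finset.sum_add_distrib, ← Finset.sum_mul, hw1]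
          rw [Fintype.sum_prod_type]
          simp only [mul_neg, Finset.sum_neg_distrib, Finset.mul_sum]
          simp only [mul_assoc]; ring
        rw [e1] at h1
        simp only [hf]
        linarith
      refine lt_of_le_of_lt ?_ hfs
      have hjen : ∀ l : A × X, Real.log (gf (S l.1 l.2) (F l.1) sb) ≤ ∑ i, c i * Real.log (gf (S l.1 l.2) (F l.1) (sg i)) := by
        intro l
        have hsup := fun i => logZf_support (b := bL (hS l.1 l.2).1.1 (hFK l.1).1.1.1) (pL_nonneg (hS l.1 l.2).1 (hFK l.1).1.1.1)
          (by rw [pL_sum _ _ (hS l.1 l.2).2]; exact one_pos) sb (sg i)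
        simp only [← gf_eq hδ0 (hS l.1 l.2) (hFK l.1)] at hsup
        have := Finset.sum_le_sum (s := Finset.univ) fun i _ => mul_le_mul_of_nonneg_left (hsup i) (hc0 i)
        refine le_trans (le_of_eq ?_) this
        simp only [mul_add, Finset.sum_add_distrib, ← Finset.sum_mul, hc1, ← mul_assoc, mul_sub, Finset.sum_sub_distrib]
        rw [← hsb]; ring
      have h2 : ∑ l : A × X, (P l.1 * V l.1 l.2) * Real.log (gf (S l.1 l.2) (F l.1) sb) ≤
          ∑ i, c i * ∑ l : A × X, (P l.1 * V l.1 l.2) * Real.log (gf (S l.1 l.2) (F l.1) (sg i)) := by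
        refine (Finset.sum_le_sum fun l _ => mul_le_mul_of_nonneg_left (hjen l) (hw0 l)).trans (le_of_eq ?_)
        simp only [Finset.mul_sum]
        rw [Finset.sum_comm]
        refine Finset.sum_congr rfl fun i _ => Finset.sum_congr rfl fun l _ => by ring
      have e3 : ∑ i, c i * f (sg i) F =
          -(∑ i, c i * ∑ l : A × X, (P l.1 * V l.1 l.2) * Real.log (gf (S l.1 l.2) (F l.1) (sg i))) - sb * R' - (1 - sb) * E := by
        have : ∀ i, c i * f (sg i) F = -(c i * ∑ l : A × X, (P l.1 * V l.1 l.2) * Real.log (gf (S l.1 l.2) (F l.1) (sg i)))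
            - (c i * sg i) * R' - (c i - c i * sg i) * E := by intro i; simp only [hf]; ring
        simp only [this, Finset.sum_sub_distrib, Finset.sum_neg_distrib, ← Finset.sum_mul, hc1, ← hsb]
      rw [e3]
      simp only [hf]
      linarith
  obtain ⟨F, hFK, hFs⟩ := hmain
  refine ⟨δ, hδ0, F, hFK, fun t ht => ?_⟩
  -- nearest grid point
  have hgrid : ∃ i, |t - sg i| ≤ 1 / N := by
    by_cases h1 : t = 1
    · refine ⟨⟨N0, by omega⟩, ?_⟩
      simp only [hsg, h1, hN]
      push_cast
      rw [abs_le]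
      constructor
      · rw [neg_le_sub_iff_le_add]
        have : ((N0:ℝ) + 1) / (N0 + 1 + 1) ≤ 1 := by rw [div_le_one (by positivity)]; linarith
        have : (0:ℝ) ≤ 1 / (N0 + 1) := by positivity
        linarith
      · have e : 1 - ((N0:ℝ) + 1) / (N0 + 1 + 1) = 1 / (N0 + 1 + 1) := by field_simp; ring
        rw [e]
        apply one_div_le_one_div_of_le <;> linarith [(Nat.cast_nonneg N0 : (0:ℝ) ≤ N0)]
    · have ht1 : t < 1 := lt_of_le_of_ne ht.2 h1
      have htN : 0 ≤ t * N := mul_nonneg ht.1 hNpos.le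
      have hfl := Nat.floor_le htN
      have hfl2 := Nat.lt_floor_add_one (t * N)
      have hlt : ⌊t * N⌋₊ < N := by
        rw [Nat.floor_lt htN]; nlinarith
      refine ⟨⟨⌊t * N⌋₊, hlt⟩, ?_⟩
      simp only [hsg]
      set m : ℝ := (⌊t * N⌋₊ : ℝ)
      have hmN : m + 1 ≤ N := by
        have : ⌊t * N⌋₊ + 1 ≤ N := hlt
        have h3 : ((⌊t * N⌋₊ + 1 : ℕ) : ℝ) ≤ (N : ℝ) := Nat.cast_le.2 this
        rw [Nat.cast_add, Nat.cast_one] at h3; exact h3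
      have hm0 : 0 ≤ m := Nat.cast_nonneg _
      have hA1 : m / N ≤ t := by rw [div_le_iff₀ hNpos]; exact hfl
      have hA2 : t ≤ (m + 1) / N := by rw [le_div_iff₀ hNpos]; exact hfl2.le
      have hA3 : m / N ≤ (m + 1) / (N + 1) := by
        rw [div_le_div_iff₀ hNpos (by linarith)]; nlinarith
      have hA4 : (m + 1) / (N + 1) ≤ (m + 1) / N := by
        apply div_le_div_of_nonneg_left <;> linarith
      have hA5 : (m + 1) / N = m / N + 1 / N := by ring
      rw [abs_le]; constructor <;> linarith
  obtain ⟨i, hi⟩ := hgrid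
  have hfi := hFs i
  simp only [hf] at hfi
  have hl : ∑ l : A × X, (P l.1 * V l.1 l.2) * (Real.log (gf (S l.1 l.2) (F l.1) (sg i)) - B * |t - sg i|) ≤
      ∑ l : A × X, (P l.1 * V l.1 l.2) *
          Real.log (Zf (pL (hS l.1 l.2).1.1 (hFK l.1).1.1.1) (bL (hS l.1 l.2).1.1 (hFK l.1).1.1.1) t) := by
    apply Finset.sum_le_sum
    intro l _
    apply mul_le_mul_of_nonneg_left _ (hw0 l)
    rw [gf_eq hδ0 (hS l.1 l.2) (hFK l.1)]
    exact logZf_lip (pL_nonneg (hS l.1 l.2).1 (hFK l.1).1.1.1)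
          (by rw [pL_sum _ _ (hS l.1 l.2).2]; exact one_pos) (fun k _ => hB l _ (hFK l.1) k) _ _
  refine le_trans ?_ hl
  simp only [mul_sub, Finset.sum_sub_distrib, ← Finset.sum_mul, hw1, one_mul]
  have hR1 : (sg i - t) * R' ≤ |t - sg i| * |R'| := by
    rw [← abs_mul, ← abs_neg]; refine le_trans (le_of_eq ?_) (le_abs_self _); ring
  have hE1 : (t - sg i) * E ≤ |t - sg i| * |E| := by
    rw [← abs_mul]; exact le_abs_self _
  have hsum : |t - sg i| * (B + |R'| + |E|) ≤ η := by
    refine le_trans ?_ hNB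
    rw [mul_comm]
    exact mul_le_mul_of_nonneg_left hi (by positivity)
  linarith

end findF

section final
variable {d : ℕ}

section psd
open scoped MatrixOrder Matrix.Norms.L2Operator
lemma psd_factor {M : Matrix (Fin d) (Fin d) ℂ} (hA : M.PosSemidef) :
    ∃ B : Matrix (Fin d) (Fin d) ℂ, M = B.conjTranspose * B :=
  CStarAlgebra.nonneg_iff_eq_star_mul_self.mp hA.nonneg
end psd

lemma tens_psd {n : ℕ} (M : Fin n → Matrix (Fin d) (Fin d) ℂ) (h : ∀ k, (M k).PosSemidef) : (tens M).PosSemidef := by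
  choose B hB using fun k => psd_factor (h k)
  have : tens M = (tens B).conjTranspose * tens B := by
    rw [← Matrix.star_eq_conjTranspose, tens_star, tens_mul]
    congr 1; ext1 k; exact hB k
  rw [this]
  exact Matrix.posSemidef_conjTranspose_mul_self _

lemma letter_sum {A X : Type*} [Fintype A] [DecidableEq A] [Fintype X] [DecidableEq X] {n : ℕ} (hn : n ≠ 0)
    (a : Fin n → A) (w : Fin n → X) (D : A × X → ℝ) :
    ∑ i, D (a i, w i) = n * ∑ l : A × X, (composition a l.1 * condComp a w l.1 l.2) * D l := by
  have hn' : (n : ℝ) ≠ 0 := by exact_mod_cast hn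
  have h1 : ∀ l : A × X, (n : ℝ) * ((composition a l.1 * condComp a w l.1 l.2) * D l) =
      ∑ i ∈ Finset.univ.filter (fun i => (a i, w i) = l), D (a i, w i) := by
    intro l
    have e : ∑ i ∈ Finset.univ.filter (fun i => (a i, w i) = l), D (a i, w i) =
        ∑ i ∈ Finset.univ.filter (fun i => (a i, w i) = l), D l :=
      Finset.sum_congr rfl fun i hi => by rw [(Finset.mem_filter.1 hi).2]
    rw [e, Finset.sum_const, nsmul_eq_mul]
    have e2 : Finset.univ.filter (fun i => (a i, w i) = l) = Finset.univ.filter (fun i => a i = l.1 ∧ w i = l.2) := by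
      ext i; simp [Prod.ext_iff]
    rw [e2]
    unfold composition condComp
    by_cases hc : ((Finset.univ.filter (fun i => a i = l.1)).card : ℝ) = 0
    · have h0 : (Finset.univ.filter (fun i => a i = l.1 ∧ w i = l.2)).card = 0 := by
        have h2 : (Finset.univ.filter (fun i => a i = l.1 ∧ w i = l.2)).card ≤ (Finset.univ.filter (fun i => a i = l.1)).card :=
          Finset.card_le_card fun i hi => by
            simp only [Finset.mem_filter, Finset.mem_univ, true_and] at hi ⊢; exact hi.1
        have h3 : (Finset.univ.filter (fun i => a i = l.1)).card = 0 := by exact_mod_cast hc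
        omega
      rw [h0, hc]; simp
    · field_simp
  rw [Finset.mul_sum]
  simp only [h1]
  exact (Finset.sum_fiberwise Finset.univ (fun i => (a i, w i)) (fun i => D (a i, w i))).symm

lemma code_bound {A X : Type*} [Fintype A] [DecidableEq A] [Fintype X] [DecidableEq X]
    (S : A → X → Matrix (Fin d) (Fin d) ℂ) (hS : ∀ a x, IsDensity (S a x))
    (F : A → Matrix (Fin d) (Fin d) ℂ) {δ : ℝ} (hδ : 0 < δ) (hF : ∀ a, F a ∈ Kset d δ)
    (T u v : A × X → Fin d × Fin d → ℝ) (hT : ∀ l k, 0 ≤ T l k)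
    (hp : ∀ (l : A × X) k, pL (hS l.1 l.2).1.1 (hF l.1).1.1.1 k = T l k * Real.exp (- u l k))
    (hq : ∀ (l : A × X) k, pL (hS l.1 l.2).1.1 (hF l.1).1.1.1 k * Real.exp (bL (hS l.1 l.2).1.1 (hF l.1).1.1.1 k)
      = T l k * Real.exp (- v l k))
    {n : ℕ} (D1 D2 R : ℝ) (h8 : Real.exp (-(n * (R - D2))) ≤ 1 / 8) (a : Fin n → A)
    {M : ℕ} (w : Fin M → Fin n → X) (Pv : Fin M → Matrix (Fin n → Fin d) (Fin n → Fin d) ℂ)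
    (hM : Real.exp (n * R) ≤ M) (hPv : IsPOVM Pv)
    (hG : ∀ m, ∃ G : Finset (Fin n → Fin d × Fin d), 1 / 2 ≤ ∑ ω ∈ G, ∏ i, T (a i, w m i) (ω i) ∧
        ∀ ω ∈ G, ∑ i, u (a i, w m i) (ω i) ≤ n * D1 ∧ ∑ i, v (a i, w m i) (ω i) ≤ n * D2) :
    1 / 8 * Real.exp (-(n * D1)) ≤ ⨆ m : Fin M, (1 - (Matrix.trace (Pv m * signalStateVar S a (w m))).re) := by
  set Fn := tens (fun k => F (a k)) with hFn
  have hFnp : Fn.PosSemidef := tens_psd _ fun k => (hF (a k)).1.1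
  have hFn1 : Fn.trace = 1 := by
    rw [hFn, tens_trace]; exact Finset.prod_eq_one fun k _ => (hF (a k)).1.2
  have hMpos : (0:ℝ) < M := (Real.exp_pos _).trans_le hM
  have hsum : ∑ m, (Pv m * Fn).trace.re ≤ 1 := by
    have := trace_mul_re_nonneg hPv.2 hFnp
    rw [Matrix.sub_mul, Matrix.one_mul, Matrix.trace_sub, hFn1, Finset.sum_mul, Matrix.trace_sum,
      Complex.sub_re, Complex.re_sum] at this
    simp only [Complex.one_re] at this
    linarith
  obtain ⟨m, hm⟩ : ∃ m, (Pv m * Fn).trace.re ≤ 1 / M := by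
    by_contra hcon
    push Not at hcon
    have hne : (Finset.univ : Finset (Fin M)).Nonempty := by
      have : 0 < M := by exact_mod_cast hMpos
      exact ⟨⟨0, this⟩, Finset.mem_univ _⟩
    have := Finset.sum_lt_sum_of_nonempty hne fun m _ => hcon m
    rw [Finset.sum_const, Finset.card_univ, Fintype.card_fin, nsmul_eq_mul] at this
    have e : (M : ℝ) * (1 / M) = 1 := by field_simp
    linarith
  have hm2 : (Pv m * Fn).trace.re ≤ Real.exp (-(n * R)) := by
    refine hm.trans ?_
    rw [Real.exp_neg, one_div]
    exact inv_anti₀ (Real.exp_pos _) hM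
  have hQ' : (1 - Pv m).PosSemidef := by
    have : 1 - Pv m = (1 - ∑ j, Pv j) + ∑ j ∈ Finset.univ.erase m, Pv j := by
      rw [← Finset.add_sum_erase _ _ (Finset.mem_univ m)]; abel
    rw [this]
    exact hPv.2.add (Matrix.posSemidef_sum _ fun j _ => hPv.1 j)
  set Sn := tens (fun k => S (a k) (w m k)) with hSn
  have hSn1 : Sn.trace = 1 := by
    rw [hSn, tens_trace]; exact Finset.prod_eq_one fun k _ => (hS _ _).2
  have hsig : signalStateVar S a (w m) = Sn := rfl
  set c := Real.exp (n * (D2 - D1)) with hc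
  have hos := one_shot (fun k => S (a k) (w m k)) (fun k => F (a k)) (fun k => (hS _ _).1) (fun k => (hF _).1.1)
    (hPv.1 m) hQ' (Real.exp_pos (n * (D2 - D1))).le
  rw [← hSn, ← hFn, ← hc] at hos
  have hα : ((1 - Pv m) * Sn).trace.re = 1 - (Pv m * Sn).trace.re := by
    rw [Matrix.sub_mul, Matrix.one_mul, Matrix.trace_sub, hSn1, Complex.sub_re, Complex.one_re]
  rw [hα] at hos
  obtain ⟨G, hG1, hG2⟩ := hG m
  have hlow : 1 / 2 * Real.exp (-(n * D1)) ≤ ∑ ω : Fin n → Fin d × Fin d,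
      min (∏ k, ((hS (a k) (w m k)).1.1.eigenvalues (ω k).1 * ov (hS (a k) (w m k)).1.1 (hF (a k)).1.1.1 (ω k)))
        (c * ∏ k, ((hF (a k)).1.1.1.eigenvalues (ω k).2 * ov (hS (a k) (w m k)).1.1 (hF (a k)).1.1.1 (ω k))) := by
    have hterm : ∀ ω ∈ G, (∏ i, T (a i, w m i) (ω i)) * Real.exp (-(n * D1)) ≤
        min (∏ k, ((hS (a k) (w m k)).1.1.eigenvalues (ω k).1 * ov (hS (a k) (w m k)).1.1 (hF (a k)).1.1.1 (ω k)))
        (c * ∏ k, ((hF (a k)).1.1.1.eigenvalues (ω k).2 * ov (hS (a k) (w m k)).1.1 (hF (a k)).1.1.1 (ω k))) := by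
      intro ω hω
      obtain ⟨hu, hv⟩ := hG2 ω hω
      have hT0 : 0 ≤ ∏ i, T (a i, w m i) (ω i) := Finset.prod_nonneg fun i _ => hT _ _
      apply le_min
      · have e : ∏ k, ((hS (a k) (w m k)).1.1.eigenvalues (ω k).1 * ov (hS (a k) (w m k)).1.1 (hF (a k)).1.1.1 (ω k)) =
            (∏ i, T (a i, w m i) (ω i)) * Real.exp (-∑ i, u (a i, w m i) (ω i)) := by
          rw [← Finset.sum_neg_distrib, Real.exp_sum, ← Finset.prod_mul_distrib]
          exact Finset.prod_congr rfl fun k _ => hp (a k, w m k) (ω k)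
        rw [e]
        exact mul_le_mul_of_nonneg_left (Real.exp_le_exp.2 (by linarith)) hT0
      · have e : (∏ i, T (a i, w m i) (ω i)) * Real.exp (-∑ i, v (a i, w m i) (ω i)) ≤
            ∏ k, ((hF (a k)).1.1.1.eigenvalues (ω k).2 * ov (hS (a k) (w m k)).1.1 (hF (a k)).1.1.1 (ω k)) := by
          rw [← Finset.sum_neg_distrib, Real.exp_sum, ← Finset.prod_mul_distrib]
          apply Finset.prod_le_prod
          · intro i _; exact mul_nonneg (hT _ _) (Real.exp_pos _).le
          · intro k _
            rw [← hq (a k, w m k) (ω k)]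
            exact qL_ge (hS (a k) (w m k)).1 (hF (a k)).1.1 (fun j => hδ.trans_le (Kset_eig (hF (a k)) j)) (ω k)
        refine le_trans ?_ (mul_le_mul_of_nonneg_left e (Real.exp_pos _).le)
        rw [hc, mul_left_comm, ← Real.exp_add]
        exact mul_le_mul_of_nonneg_left (Real.exp_le_exp.2 (by linarith)) hT0
    calc 1 / 2 * Real.exp (-(n * D1)) ≤ (∑ ω ∈ G, ∏ i, T (a i, w m i) (ω i)) * Real.exp (-(n * D1)) :=
          mul_le_mul_of_nonneg_right hG1 (Real.exp_pos _).le
      _ = ∑ ω ∈ G, (∏ i, T (a i, w m i) (ω i)) * Real.exp (-(n * D1)) := by rw [Finset.sum_mul]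
      _ ≤ _ := Finset.sum_le_sum hterm
      _ ≤ _ := by
        apply Finset.sum_le_sum_of_subset_of_nonneg (Finset.subset_univ _)
        intro ω _ _
        apply le_min
        · exact Finset.prod_nonneg fun k _ => mul_nonneg ((hS (a k) (w m k)).1.eigenvalues_nonneg _) (ov_nonneg _ _ _)
        · exact mul_nonneg (Real.exp_pos _).le (Finset.prod_nonneg fun k _ =>
            mul_nonneg ((hF (a k)).1.1.eigenvalues_nonneg _) (ov_nonneg _ _ _))
  have hcβ : c * (Pv m * Fn).trace.re ≤ 1 / 8 * Real.exp (-(n * D1)) := by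
    refine (mul_le_mul_of_nonneg_left hm2 (Real.exp_pos _).le).trans ?_
    have e : c * Real.exp (-(n * R)) = Real.exp (-(n * (R - D2))) * Real.exp (-(n * D1)) := by
      rw [hc, ← Real.exp_add, ← Real.exp_add]; congr 1; ring
    rw [e]
    exact mul_le_mul_of_nonneg_right h8 (Real.exp_pos _).le
  have hfin : 1 / 8 * Real.exp (-(n * D1)) ≤ 1 - (Pv m * signalStateVar S a (w m)).trace.re := by
    rw [hsig]; linarith
  exact hfin.trans (le_ciSup (f := fun m => 1 - (Pv m * signalStateVar S a (w m)).trace.re)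
    (Set.finite_range _).bddAbove m)

lemma main_real {A X : Type*} [Fintype A] [DecidableEq A] [Fintype X] [DecidableEq X]
    (S : A → X → Matrix (Fin d) (Fin d) ℂ) (hS : ∀ a x, IsDensity (S a x))
    (P : A → ℝ) (hP : IsProbDist P) (V : A → X → ℝ) (hV : ∀ a, IsProbDist (V a))
    (R ε : ℝ) (hε : 0 < ε) (E : ℝ) (hE : EspccCond S (R - ε) P V < (E : EReal)) :
    relECond S R P V ≤ (E : EReal) := by
  classical
  obtain ⟨E0, hE0, hE0E⟩ := EReal.lt_iff_exists_real_btwn.1 hE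
  have hE0E' : E0 < E := by exact_mod_cast hE0E
  set η := min ((E - E0) / 8) (ε / 8) with hη
  have hη0 : 0 < η := lt_min (by linarith) (by linarith)
  have hη1 : 8 * η ≤ E - E0 := by have := min_le_left ((E - E0) / 8) (ε / 8); linarith
  have hη2 : 8 * η ≤ ε := by have := min_le_right ((E - E0) / 8) (ε / 8); linarith
  obtain ⟨δ, hδ, F, hF, hcore⟩ := findF S hS P hP V hV (R - ε) E0 hE0 η hη0
  obtain ⟨T, u, v, hT, hT1, hp, hq, hu, hv⟩ := classical_core
    (fun l : A × X => pL (hS l.1 l.2).1.1 (hF l.1).1.1.1) (fun l : A × X => bL (hS l.1 l.2).1.1 (hF l.1).1.1.1)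
    (fun l : A × X => P l.1 * V l.1 l.2) (fun l => pL_nonneg (hS l.1 l.2).1 _)
    (fun l => by rw [pL_sum _ _ (hS l.1 l.2).2]; exact one_pos) (R - ε) E0 (2 * η) hcore
  obtain ⟨n0, hn0⟩ := ld_bound T u v hT hT1 η hη0
  unfold relECond
  refine iSup_le fun s => ?_
  obtain ⟨s, hs1, hs2, hs3⟩ := s
  apply Filter.limsup_le_of_le (by isBoundedDefault)
  have hlim : ∀ (D : A × X → ℝ) (z : ℝ), ∑ l : A × X, P l.1 * V l.1 l.2 * D l < z →
      ∀ᶠ n in Filter.atTop, ∑ l : A × X, (composition (s n).1 l.1 * (s n).2 l.1 l.2) * D l < z := by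
    intro D z hz
    have ht : Filter.Tendsto (fun n => ∑ l : A × X, (composition (s n).1 l.1 * (s n).2 l.1 l.2) * D l) Filter.atTop
        (nhds (∑ l : A × X, P l.1 * V l.1 l.2 * D l)) := by
      apply tendsto_finsetSum
      intro l _
      refine Filter.Tendsto.mul_const _ (Filter.Tendsto.mul ?_ ?_)
      · exact tendsto_pi_nhds.1 hs1 l.1
      · exact tendsto_pi_nhds.1 (tendsto_pi_nhds.1 hs2 l.1) l.2
    exact ht.eventually (gt_mem_nhds hz)
  have hnat : Filter.Tendsto (fun n : ℕ => (n : ℝ)) Filter.atTop Filter.atTop := tendsto_natCast_atTop_atTop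
  filter_upwards [hlim (fun l => ∑ k, T l k * u l k) (E0 + 3 * η) (by linarith),
    hlim (fun l => ∑ k, T l k * v l k) (R - ε + 3 * η) (by linarith),
    Filter.eventually_ge_atTop n0, Filter.eventually_ge_atTop 1,
    hnat.eventually_ge_atTop (Real.log 8 / (4 * η))] with n h1 h2 hn hn1 hn8
  have hnpos : (0:ℝ) < n := by exact_mod_cast hn1
  have hlog8 : Real.log 8 ≤ n * (4 * η) := by rwa [div_le_iff₀ (by linarith)] at hn8
  set D1 := E0 + 4 * η with hD1
  set D2 := R - ε + 4 * η with hD2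
  have h8 : Real.exp (-(n * (R - D2))) ≤ 1 / 8 := by
    rw [one_div, Real.exp_neg]
    apply inv_anti₀ (by norm_num)
    rw [← Real.log_le_iff_le_exp (by norm_num)]
    refine hlog8.trans (mul_le_mul_of_nonneg_left ?_ hnpos.le)
    rw [hD2]; linarith
  have hPe : 1 / 8 * Real.exp (-(n * D1)) ≤ PemaxCond S n R (s n).1 (s n).2 := by
    unfold PemaxCond
    apply le_csInf
    · obtain ⟨w, hw⟩ := hs3 n
      refine ⟨_, ⌈Real.exp (n * R)⌉₊, fun _ => w, fun _ => 0, Nat.le_ceil _, fun _ => hw, ⟨fun _ => Matrix.PosSemidef.zero, ?_⟩, rfl⟩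
      simpa using Matrix.PosSemidef.one
    · rintro e ⟨M, w, Pv, hM, hw, hPv, rfl⟩
      refine code_bound S hS F hδ hF T u v hT hp hq D1 D2 R h8 (s n).1 w Pv hM hPv fun m => ?_
      have e1 := letter_sum (by omega : n ≠ 0) (s n).1 (w m) (fun l => ∑ k, T l k * u l k)
      have e2 := letter_sum (by omega : n ≠ 0) (s n).1 (w m) (fun l => ∑ k, T l k * v l k)
      rw [hw m] at e1 e2
      obtain ⟨G, hG1, hG2⟩ := hn0 n hn (fun i => ((s n).1 i, w m i)) (E0 + 3 * η) (R - ε + 3 * η)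
        (by rw [e1]; exact mul_le_mul_of_nonneg_left h1.le hnpos.le)
        (by rw [e2]; exact mul_le_mul_of_nonneg_left h2.le hnpos.le)
      refine ⟨G, hG1, fun ω hω => ?_⟩
      obtain ⟨g1, g2⟩ := hG2 ω hω
      refine ⟨g1.trans_eq ?_, g2.trans_eq ?_⟩
      · rw [hD1]; ring
      · rw [hD2]; ring
  have hpos : 0 < 1 / 8 * Real.exp (-(n * D1)) := by positivity
  unfold negLog
  rw [if_neg (not_le.2 (hpos.trans_le hPe)), ← EReal.coe_mul, EReal.coe_le_coe_iff]
  have hl := Real.log_le_log hpos hPe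
  rw [Real.log_mul (by norm_num) (Real.exp_pos _).ne', Real.log_exp, one_div, Real.log_inv] at hl
  rw [inv_mul_le_iff₀ hnpos]
  have : n * D1 + n * (4 * η) ≤ n * E := by
    rw [← mul_add]; exact mul_le_mul_of_nonneg_left (by rw [hD1]; linarith) hnpos.le
  linarith

end final

/-- **Conditional sphere packing bound for varying classical-quantum channels**:
`E({Cₐ}, R, P, V) ≤ E_sp^cc({Cₐ}, R-ε, P, V)`. -/
theorem conditional_sphere_packing_bound
    {A X : Type*} [Fintype A] [DecidableEq A] [Fintype X] [DecidableEq X] {d : ℕ}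
    (S : A → X → Matrix (Fin d) (Fin d) ℂ) (hS : ∀ a x, IsDensity (S a x))
    (P : A → ℝ) (hP : IsProbDist P)
    (V : A → X → ℝ) (hV : ∀ a, IsProbDist (V a))
    (R : ℝ) (hR : 0 < R) (ε : ℝ) (hε : 0 < ε) (hεR : ε < R) :
    relECond S R P V ≤ EspccCond S (R - ε) P V := by
  rw [← EReal.le_of_forall_lt_iff_le]
  intro z hz
  exact main_real S hS P hP V hV R ε hε z hz

end SPB
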